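/- arXiv:1604.05439 — 8 statements merged into one kernel-verified Lean document; each statement's English description precedes it below -/
import Mathlib

section
/- Let E be a graph with finitely many vertices, let η ⊆ Γ_E be a hereditary subset of the component poset, and let v be a regular vertex of E such that there is no path from v to any vertex of any component in Γ_E \ η. Then v belongs to the saturation of H(∪η), the smallest hereditary subset of E⁰ containing the union of the components in η. -/
attribute [local instance] Classical.propDecidable

/-- A directed graph: a set of vertices, a set of edges, and source/range maps. -/
structure DirGraph : Type 1 where
  V : Type
  E : Type
  s : E → V
  r : E → V

namespace DirGraph

variable (G : DirGraph)

/-- A vertex is regular if it emits a finite nonzero number of edges. -/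
def Regular (v : G.V) : Prop :=
  {e : G.E | G.s e = v}.Finite ∧ {e : G.E | G.s e = v}.Nonempty

/-- A vertex is a sink if it emits no edges. -/
def IsSink (v : G.V) : Prop := ∀ e : G.E, G.s e ≠ v

/-- A vertex is an infinite emitter if it emits infinitely many edges. -/
def InfiniteEmitter (v : G.V) : Prop := {e : G.E | G.s e = v}.Infinite

/-- One-step reachability: there is an edge from `u` to `v`. -/
def Step (u v : G.V) : Prop := ∃ e : G.E, G.s e = u ∧ G.r e = v

/-- `Reach u v` means there is a (possibly empty) path from `u` to `v`, i.e. `u ≥ v`. -/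
def Reach : G.V → G.V → Prop := Relation.ReflTransGen G.Step

/-- A vertex supports a cycle if there is a nonempty path from it to itself. -/
def SupportsCycle (v : G.V) : Prop := Relation.TransGen G.Step v v

/-- A transition state is a regular vertex which does not support a cycle. -/
def TransitionState (v : G.V) : Prop := G.Regular v ∧ ¬ G.SupportsCycle v

/-- A set of vertices is hereditary if it is closed under reachability. -/
def Hereditary (H : Set G.V) : Prop := ∀ u v : G.V, u ∈ H → G.Reach u v → v ∈ H

/-- A set of vertices is saturated if it contains every regular vertex all of whose
emitted edges end in the set. -/
def Saturated (S : Set G.V) : Prop :=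
  ∀ v : G.V, G.Regular v → (∀ e : G.E, G.s e = v → G.r e ∈ S) → v ∈ S

/-- `H(S)`: the smallest hereditary set containing `S`. -/
def heredClosure (S : Set G.V) : Set G.V := ⋂₀ {H : Set G.V | G.Hereditary H ∧ S ⊆ H}

/-- The saturation of `S`: the smallest saturated set containing `S`. -/
def saturate (S : Set G.V) : Set G.V := ⋂₀ {T : Set G.V | G.Saturated T ∧ S ⊆ T}

/-- A nonempty set is strongly connected if any two of its vertices are joined by
a nonempty path. -/
def StronglyConn (S : Set G.V) : Prop :=
  S.Nonempty ∧ ∀ u ∈ S, ∀ v ∈ S, Relation.TransGen G.Step u v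

/-- The components of `G` (elements of `Γ_E`): maximal strongly connected subsets together
with singletons of singular vertices not supporting a cycle. -/
def IsComponent (γ : Set G.V) : Prop :=
  (G.StronglyConn γ ∧ ∀ δ : Set G.V, G.StronglyConn δ → γ ⊆ δ → δ = γ) ∨
  (∃ v : G.V, γ = {v} ∧ ¬ G.Regular v ∧ ¬ G.SupportsCycle v)

/-- The order on components: `γ ≥ δ` iff some vertex of `γ` reaches some vertex of `δ`. -/
def CompGE (γ δ : Set G.V) : Prop := ∃ u ∈ γ, ∃ w ∈ δ, G.Reach u w

/-- `η` is a hereditary set of components. -/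
def HeredComp (η : Set (Set G.V)) : Prop :=
  (∀ γ ∈ η, G.IsComponent γ) ∧
  ∀ γ δ : Set G.V, γ ∈ η → G.IsComponent δ → G.CompGE γ δ → δ ∈ η

/-- A list of edges is a path if consecutive edges are composable. -/
def IsPathChain (p : List G.E) : Prop := List.Chain' (fun e f => G.r e = G.s f) p

/-- `p` is a return path based at `v`: a nonempty path from `v` to `v` not revisiting `v`
before the final edge. -/
def IsReturnPath (v : G.V) (p : List G.E) : Prop :=
  ∃ h : p ≠ [], G.IsPathChain p ∧ G.s (p.head h) = v ∧ G.r (p.getLast h) = v ∧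
    ∀ e ∈ p.dropLast, G.r e ≠ v

/-- `v` supports (at least) two distinct return paths. -/
def TwoReturnPaths (v : G.V) : Prop :=
  ∃ p q : List G.E, G.IsReturnPath v p ∧ G.IsReturnPath v q ∧ p ≠ q

/-- `v` supports a unique return path. -/
def UniqueReturnPath (v : G.V) : Prop := ∃! p : List G.E, G.IsReturnPath v p

/-- A component is cyclic if each of its vertices supports exactly one return path. -/
def CyclicComponent (γ : Set G.V) : Prop :=
  G.IsComponent γ ∧ ∀ v ∈ γ, G.UniqueReturnPath v

/-- Condition (K): every vertex supports either no return path or at least two. -/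
def ConditionK : Prop :=
  ∀ v : G.V, (¬ ∃ p : List G.E, G.IsReturnPath v p) ∨ G.TwoReturnPaths v

/-- The cycle (or path) `p` has an exit. -/
def HasExit (p : List G.E) : Prop := ∃ f e : G.E, e ∈ p ∧ G.s f = G.s e ∧ f ≠ e

/-- `p` is a nonempty path from `v` to `w`. -/
def IsPathFromTo (v w : G.V) (p : List G.E) : Prop :=
  ∃ h : p ≠ [], G.IsPathChain p ∧ G.s (p.head h) = v ∧ G.r (p.getLast h) = w

/-- Condition (H). -/
def ConditionH : Prop :=
  ∀ v : G.V, G.Regular v → G.UniqueReturnPath v →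
    (∀ p : List G.E, G.IsReturnPath v p → ¬ G.HasExit p) ∨
    ∃ w : G.V, w ≠ v ∧ (¬ G.Regular w ∨ G.UniqueReturnPath w) ∧
      (∃ p : List G.E, G.IsPathFromTo v w p) ∧
      ∀ p : List G.E, G.IsPathFromTo v w p → ∀ e ∈ p,
        ¬ G.TwoReturnPaths (G.s e) ∧ ¬ G.TwoReturnPaths (G.r e)

/-- The temperature `τ_E(γ) = sgn(|γ¹| − |γ|)` of a set of vertices, with the conventions
`sgn(0) = 0` and `sgn(∞) = 1`. -/
noncomputable def temp (γ : Set G.V) : ℤ :=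
  if {e : G.E | G.s e ∈ γ ∧ G.r e ∈ γ}.Infinite then 1
  else Int.sign ((Nat.card {e : G.E | G.s e ∈ γ ∧ G.r e ∈ γ} : ℤ) - (Nat.card γ : ℤ))

end DirGraph

namespace DirGraph

/-- A vertex supporting a cycle lies in a maximal strongly connected set. -/
theorem SupportsCycle.exists_isComponent {G : DirGraph} {u : G.V} (hu : G.SupportsCycle u) :
    ∃ γ : Set G.V, G.IsComponent γ ∧ u ∈ γ := by
  refine ⟨{w | Relation.TransGen G.Step u w ∧ Relation.TransGen G.Step w u},
    Or.inl ⟨⟨⟨u, hu, hu⟩, fun a ha b hb => ha.2.trans hb.1⟩, fun δ hδ hsub => ?_⟩, hu, hu⟩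
  have huδ : u ∈ δ := hsub ⟨hu, hu⟩
  exact Set.Subset.antisymm (fun w hw => ⟨hδ.2 u huδ w hw, hδ.2 w hw u huδ⟩) hsub

/-- A vertex lying in no component is a transition state. -/
theorem exists_isComponent_or_transitionState {G : DirGraph} (u : G.V) :
    (∃ γ : Set G.V, G.IsComponent γ ∧ u ∈ γ) ∨ G.TransitionState u := by
  by_cases hc : G.SupportsCycle u
  · exact Or.inl hc.exists_isComponent
  · by_cases hr : G.Regular u
    · exact Or.inr ⟨hr, hc⟩
    · exact Or.inl ⟨{u}, Or.inr ⟨u, rfl, hr, hc⟩, rfl⟩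

/-- In a graph with finitely many vertices, strict reachability (`u` reaches `w` but not
conversely) is well-founded. -/
theorem wellFounded_strictReach (G : DirGraph) [Finite G.V] :
    WellFounded fun w u : G.V =>
      Relation.TransGen G.Step u w ∧ ¬ Relation.TransGen G.Step w u := by
  let R : G.V → G.V → Prop := fun w u =>
    Relation.TransGen G.Step u w ∧ ¬ Relation.TransGen G.Step w u
  have : IsTrans G.V R :=
    ⟨fun a b c hab hbc => ⟨hbc.1.trans hab.1, fun hac => hab.2 (hac.trans hbc.1)⟩⟩
  have : Std.Irrefl R := ⟨fun a ha => ha.2 ha.1⟩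
  exact Finite.wellFounded_of_trans_of_irrefl R

/-- In a graph with finitely many vertices, a saturated set containing every component vertex
reachable from `u` contains `u`. -/
theorem Saturated.mem_of_forall_isComponent {G : DirGraph} [Finite G.V] {T : Set G.V}
    (hT : G.Saturated T) {u : G.V}
    (h : ∀ γ : Set G.V, G.IsComponent γ → ∀ w ∈ γ, G.Reach u w → w ∈ T) : u ∈ T := by
  induction u using G.wellFounded_strictReach.induction with
  | _ u ih =>
    rcases exists_isComponent_or_transitionState u with ⟨γ, hγ, hu⟩ | ⟨hr, hc⟩
    · exact h γ hγ u hu .refl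
    · refine hT u hr fun e he => ?_
      have hstep : G.Step u (G.r e) := ⟨e, he, rfl⟩
      exact ih _ ⟨.single hstep, fun hback => hc (.head hstep hback)⟩
        fun γ hγ w hw hreach => h γ hγ w hw (.head hstep hreach)

end DirGraph

open DirGraph in
/-- Lemma 3.11 / `lem:structure-a`: if `η ⊆ Γ_E` is hereditary and the
regular vertex `v` has no path to any vertex of any component outside `η`, then `v`
lies in the saturation of `H(∪η)`. -/
theorem stmt0 (G : DirGraph) (hcE : Countable G.E) (hfin : Finite G.V)
    (η : Set (Set G.V)) (hη : G.HeredComp η)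
    (v : G.V) (hreg : G.Regular v)
    (hnopath : ∀ γ : Set G.V, G.IsComponent γ → γ ∉ η → ∀ w ∈ γ, ¬ G.Reach v w) :
    v ∈ G.saturate (G.heredClosure (⋃₀ η)) := by
  rintro T ⟨hT, hsub⟩
  refine hT.mem_of_forall_isComponent fun γ hγ w hw hreach => ?_
  have hγη : γ ∈ η := by_contra fun hn => hnopath γ hγ hn w hw hreach
  exact hsub fun H hH => hH.2 ⟨γ, hγη, hw⟩
end

section
/- Let E be a graph with finitely many vertices. Then the map η ↦ saturation of H(∪η) is a bijective order isomorphism (with respect to set inclusion) from the hereditary subsets of Γ_E onto the saturated hereditary subsets of E⁰; moreover ∪η = (∪Γ_E) ∩ (saturation of H(∪η)). Conversely, for every saturated hereditary subset H ⊆ E⁰, the set (∪Γ_E) ∩ H is a disjoint union of all the components that intersect H nontrivially, the set η of these components is a hereditary subset of Γ_E, and the saturation of H(∪η) equals H. -/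
attribute [local instance] Classical.propDecidable

namespace DirGraph

variable {G : DirGraph}

lemma subset_heredClosure (S : Set G.V) : S ⊆ G.heredClosure S :=
  fun _ hv _ hT => hT.2 hv

lemma heredClosure_subset {S H : Set G.V} (hH : G.Hereditary H) (h : S ⊆ H) :
    G.heredClosure S ⊆ H :=
  fun _ hv => hv H ⟨hH, h⟩

lemma hereditary_heredClosure (S : Set G.V) : G.Hereditary (G.heredClosure S) :=
  fun u v hu huv T hT => hT.1 u v (hu T hT) huv

lemma exists_reach_of_mem_heredClosure {S : Set G.V} {v : G.V} (hv : v ∈ G.heredClosure S) :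
    ∃ u ∈ S, G.Reach u v :=
  hv {w | ∃ u ∈ S, G.Reach u w}
    ⟨fun _ _ ⟨a, ha, hau⟩ huv => ⟨a, ha, hau.trans huv⟩, fun a ha => ⟨a, ha, .refl⟩⟩

lemma subset_saturate (S : Set G.V) : S ⊆ G.saturate S :=
  fun _ hv _ hT => hT.2 hv

lemma saturate_subset {S T : Set G.V} (hT : G.Saturated T) (h : S ⊆ T) : G.saturate S ⊆ T :=
  fun _ hv => hv T ⟨hT, h⟩

lemma saturated_saturate (S : Set G.V) : G.Saturated (G.saturate S) :=
  fun v hv h T hT => hT.1 v hv fun e he => h e he T hT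

lemma hereditary_saturate {S : Set G.V} (hS : G.Hereditary S) : G.Hereditary (G.saturate S) := by
  have key : G.saturate S ⊆ {v | ∀ w, G.Reach v w → w ∈ G.saturate S} := by
    refine saturate_subset (fun v hv h w hvw => ?_)
      (fun v hv w hvw => subset_saturate S (hS v w hv hvw))
    rcases hvw.cases_head with rfl | ⟨x, ⟨e, he, rfl⟩, hxw⟩
    · exact saturated_saturate S v hv fun e he => h e he _ .refl
    · exact h e he w hxw
  exact fun u v hu huv => key hu v huv

lemma IsComponent.nonempty {γ : Set G.V} (hγ : G.IsComponent γ) : γ.Nonempty := by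
  rcases hγ with h | ⟨v, rfl, -⟩
  · exact h.1.1
  · exact Set.singleton_nonempty v

lemma IsComponent.reach {γ : Set G.V} (hγ : G.IsComponent γ) {u v : G.V} (hu : u ∈ γ)
    (hv : v ∈ γ) : G.Reach u v := by
  rcases hγ with h | ⟨w, rfl, -⟩
  · exact (h.1.2 u hu v hv).to_reflTransGen
  · rw [Set.mem_singleton_iff] at hu hv
    subst hu hv
    exact .refl

/-- The vertices lying on a common closed path with `v`. -/
def cycleClass (v : G.V) : Set G.V :=
  {w | Relation.TransGen G.Step v w ∧ Relation.TransGen G.Step w v}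

lemma SupportsCycle.isComponent_cycleClass {v : G.V} (hv : G.SupportsCycle v) :
    G.IsComponent (cycleClass v) := by
  have hmem : v ∈ cycleClass v := ⟨hv, hv⟩
  exact .inl ⟨⟨⟨v, hmem⟩, fun a ha b hb => ha.2.trans hb.1⟩, fun δ hδ h =>
    Set.Subset.antisymm (fun w hw => ⟨hδ.2 v (h hmem) w hw, hδ.2 w hw v (h hmem)⟩) h⟩

/-- A component is determined by any of its vertices. -/
lemma IsComponent.eq_cycleClass_or_singleton {γ : Set G.V} (hγ : G.IsComponent γ) {v : G.V}
    (hv : v ∈ γ) :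
    (G.SupportsCycle v ∧ γ = cycleClass v) ∨
      (¬ G.Regular v ∧ ¬ G.SupportsCycle v ∧ γ = {v}) := by
  rcases hγ with ⟨hsc, hmax⟩ | ⟨w, rfl, hreg, hcyc⟩
  · refine .inl ⟨hsc.2 v hv v hv, (hmax _ ⟨⟨v, ?_⟩, fun a ha b hb => ha.2.trans hb.1⟩ ?_).symm⟩
    · exact ⟨hsc.2 v hv v hv, hsc.2 v hv v hv⟩
    · exact fun w hw => ⟨hsc.2 v hv w hw, hsc.2 w hw v hv⟩
  · rw [Set.mem_singleton_iff] at hv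
    subst hv
    exact .inr ⟨hreg, hcyc, rfl⟩

lemma IsComponent.eq_of_mem {γ δ : Set G.V} (hγ : G.IsComponent γ) (hδ : G.IsComponent δ)
    {v : G.V} (hvγ : v ∈ γ) (hvδ : v ∈ δ) : γ = δ := by
  rcases hγ.eq_cycleClass_or_singleton hvγ with ⟨h, rfl⟩ | ⟨-, h, rfl⟩ <;>
    rcases hδ.eq_cycleClass_or_singleton hvδ with ⟨h', rfl⟩ | ⟨-, h', rfl⟩
  · rfl
  · exact absurd h h'
  · exact absurd h' h
  · rfl

lemma IsComponent.subset_of_hereditary {γ H : Set G.V} (hγ : G.IsComponent γ)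
    (hH : G.Hereditary H) (h : (γ ∩ H).Nonempty) : γ ⊆ H := by
  obtain ⟨u, hu, huH⟩ := h
  exact fun v hv => hH u v huH (hγ.reach hu hv)

lemma IsComponent.saturated_compl {γ : Set G.V} (hγ : G.IsComponent γ) : G.Saturated γᶜ := by
  intro v hreg h hv
  rcases hγ.eq_cycleClass_or_singleton hv with ⟨hcyc, rfl⟩ | ⟨hv, -⟩
  · obtain ⟨w, ⟨e, he, rfl⟩, hwv⟩ := Relation.TransGen.head'_iff.mp hcyc
    exact h e he ⟨.single ⟨e, he, rfl⟩, Relation.TransGen.trans_right hwv hcyc⟩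
  · exact hv hreg

lemma IsComponent.inter_nonempty_of_saturate {γ S : Set G.V} (hγ : G.IsComponent γ)
    (h : (γ ∩ G.saturate S).Nonempty) : (γ ∩ S).Nonempty := by
  by_contra hS
  obtain ⟨v, hv, hvS⟩ := h
  exact saturate_subset hγ.saturated_compl (fun w hw hwγ => hS ⟨w, hwγ, hw⟩) hvS hv

lemma HeredComp.mem_of_inter_saturate_nonempty {η : Set (Set G.V)} (hη : G.HeredComp η)
    {γ : Set G.V} (hγ : G.IsComponent γ)
    (h : (γ ∩ G.saturate (G.heredClosure (⋃₀ η))).Nonempty) : γ ∈ η := by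
  obtain ⟨v, hv, hvS⟩ := hγ.inter_nonempty_of_saturate h
  obtain ⟨u, ⟨δ, hδ, hu⟩, huv⟩ := exists_reach_of_mem_heredClosure hvS
  exact hη.2 δ γ hδ hγ ⟨u, hu, v, hv, huv⟩

lemma subset_saturate_heredClosure (S : Set G.V) : S ⊆ G.saturate (G.heredClosure S) :=
  (subset_heredClosure S).trans (subset_saturate _)

lemma saturate_heredClosure_subset {S H : Set G.V} (hH : G.Hereditary H) (hH' : G.Saturated H)
    (h : S ⊆ H) : G.saturate (G.heredClosure S) ⊆ H :=
  saturate_subset hH' (heredClosure_subset hH h)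

lemma hereditary_saturate_heredClosure (S : Set G.V) :
    G.Hereditary (G.saturate (G.heredClosure S)) :=
  hereditary_saturate (hereditary_heredClosure S)

/-- In a graph with finitely many vertices, a hereditary set lies in every saturated set that
contains all components meeting it. -/
lemma Hereditary.subset_of_components [Finite G.V] {H K : Set G.V} (hH : G.Hereditary H)
    (hK : G.Saturated K) (h : ∀ γ, G.IsComponent γ → (γ ∩ H).Nonempty → γ ⊆ K) : H ⊆ K := by
  intro v hv
  induction hn : {w | G.Reach v w}.ncard using Nat.strong_induction_on generalizing v with
  | _ n ih =>
  by_cases hcyc : G.SupportsCycle v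
  · exact h _ hcyc.isComponent_cycleClass ⟨v, ⟨hcyc, hcyc⟩, hv⟩ ⟨hcyc, hcyc⟩
  by_cases hreg : G.Regular v
  · refine hK v hreg fun e he => ?_
    have hstep : G.Step v (G.r e) := ⟨e, he, rfl⟩
    refine ih _ ?_ (hH v _ hv (.single hstep)) rfl
    rw [← hn]
    refine Set.ncard_lt_ncard ?_ (Set.toFinite _)
    refine (Set.ssubset_iff_of_subset fun w hw => ?_).mpr ⟨v, .refl, fun hback => ?_⟩
    · exact Relation.ReflTransGen.head hstep hw
    · exact hcyc (Relation.TransGen.head' hstep hback)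
  · exact h {v} (.inr ⟨v, rfl, hreg, hcyc⟩) ⟨v, rfl, hv⟩ rfl

end DirGraph

open DirGraph in
/-- Lemma `lem:structure-b`: the map `η ↦ saturation of H(∪η)` is a
bijective order isomorphism from the hereditary subsets of `Γ_E` onto the saturated
hereditary subsets of `E⁰`, with `∪η = (∪Γ_E) ∩ saturation of H(∪η)`; conversely
every saturated hereditary `H` arises from the hereditary set of components meeting
`H`, and `(∪Γ_E) ∩ H` is the disjoint union of those components. -/
theorem stmt1 (G : DirGraph) (hcE : Countable G.E) (hfin : Finite G.V) :
    (∀ η₁ η₂ : Set (Set G.V), G.HeredComp η₁ → G.HeredComp η₂ →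
      (η₁ ⊆ η₂ ↔
        G.saturate (G.heredClosure (⋃₀ η₁)) ⊆ G.saturate (G.heredClosure (⋃₀ η₂)))) ∧
    (∀ η : Set (Set G.V), G.HeredComp η →
      G.Hereditary (G.saturate (G.heredClosure (⋃₀ η))) ∧
      G.Saturated (G.saturate (G.heredClosure (⋃₀ η))) ∧
      ⋃₀ η = (⋃₀ {γ : Set G.V | G.IsComponent γ}) ∩ G.saturate (G.heredClosure (⋃₀ η))) ∧
    (∀ H : Set G.V, G.Hereditary H → G.Saturated H →
      ((⋃₀ {γ : Set G.V | G.IsComponent γ}) ∩ H =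
        ⋃₀ {γ : Set G.V | G.IsComponent γ ∧ (γ ∩ H).Nonempty}) ∧
      (∀ γ δ : Set G.V, G.IsComponent γ → G.IsComponent δ →
        (γ ∩ H).Nonempty → (δ ∩ H).Nonempty → γ ≠ δ → Disjoint γ δ) ∧
      G.HeredComp {γ : Set G.V | G.IsComponent γ ∧ (γ ∩ H).Nonempty} ∧
      G.saturate (G.heredClosure
        (⋃₀ {γ : Set G.V | G.IsComponent γ ∧ (γ ∩ H).Nonempty})) = H) := by
  refine ⟨fun η₁ η₂ h₁ h₂ => ⟨fun h => ?_, fun h γ hγ => ?_⟩, fun η hη => ⟨?_, ?_, ?_⟩,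
    fun H hH hH' => ⟨?_, ?_, ?_, ?_⟩⟩
  · exact saturate_heredClosure_subset (hereditary_saturate_heredClosure _)
      (saturated_saturate _)
      ((Set.sUnion_subset_sUnion h).trans (subset_saturate_heredClosure _))
  · obtain ⟨v, hv⟩ := (h₁.1 γ hγ).nonempty
    exact h₂.mem_of_inter_saturate_nonempty (h₁.1 γ hγ)
      ⟨v, hv, h (subset_saturate_heredClosure _ ⟨γ, hγ, hv⟩)⟩
  · exact hereditary_saturate_heredClosure _
  · exact saturated_saturate _
  · refine Set.Subset.antisymm
      (Set.subset_inter (Set.sUnion_subset_sUnion hη.1) (subset_saturate_heredClosure _)) ?_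
    rintro v ⟨⟨γ, hγ, hv⟩, hvS⟩
    exact ⟨γ, hη.mem_of_inter_saturate_nonempty hγ ⟨v, hv, hvS⟩, hv⟩
  · ext v
    constructor
    · rintro ⟨⟨γ, hγ, hv⟩, hvH⟩
      exact ⟨γ, ⟨hγ, v, hv, hvH⟩, hv⟩
    · rintro ⟨γ, ⟨hγ, hγH⟩, hv⟩
      exact ⟨⟨γ, hγ, hv⟩, hγ.subset_of_hereditary hH hγH hv⟩
  · intro γ δ hγ hδ _ _ hne
    exact Set.disjoint_left.mpr fun v hvγ hvδ => hne (hγ.eq_of_mem hδ hvγ hvδ)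
  · refine ⟨fun γ hγ => hγ.1, ?_⟩
    rintro γ δ ⟨hγ, hγH⟩ hδ ⟨u, hu, w, hw, huw⟩
    exact ⟨hδ, w, hw, hH u w (hγ.subset_of_hereditary hH hγH hu) huw⟩
  · refine Set.Subset.antisymm (saturate_heredClosure_subset hH hH' ?_) ?_
    · exact Set.sUnion_subset fun γ hγ => hγ.1.subset_of_hereditary hH hγ.2
    · refine hH.subset_of_components (saturated_saturate _) fun γ hγ hγH => ?_
      exact fun v hv => subset_saturate_heredClosure _ ⟨γ, ⟨hγ, hγH⟩, hv⟩
end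

section
/- Let E be a graph with finitely many vertices in which every transition state has exactly one outgoing edge. Then for any two saturated hereditary subsets H₁, H₂ ⊆ E⁰, the union H₁ ∪ H₂ is saturated (so H₁ ∪ H₂ equals its own saturation). -/
attribute [local instance] Classical.propDecidable

open DirGraph in
/-- Lemma `lem:structure-2(i)`: if every transition state of `G` has
exactly one outgoing edge, then the union of two saturated hereditary sets is
saturated (hence equals its own saturation). -/
theorem stmt3 (G : DirGraph) (hcE : Countable G.E) (hfin : Finite G.V)
    (ht : ∀ v : G.V, G.TransitionState v → ∃! e : G.E, G.s e = v)
    (H₁ H₂ : Set G.V) (hH₁ : G.Hereditary H₁) (hsH₁ : G.Saturated H₁)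
    (hH₂ : G.Hereditary H₂) (hsH₂ : G.Saturated H₂) :
    G.Saturated (H₁ ∪ H₂) ∧ G.saturate (H₁ ∪ H₂) = H₁ ∪ H₂ := by
  have hsat : G.Saturated (H₁ ∪ H₂) := by
    intro v hv hout
    by_cases hc : G.SupportsCycle v
    · obtain ⟨w, ⟨e, hse, hre⟩, hwv⟩ := Relation.TransGen.head'_iff.mp hc
      exact (hout e hse).imp (fun h => hH₁ w v (hre ▸ h) hwv) (fun h => hH₂ w v (hre ▸ h) hwv)
    · obtain ⟨e, hse, huniq⟩ := ht v ⟨hv, hc⟩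
      exact (hout e hse).imp (fun h => hsH₁ v hv fun f hf => huniq f hf ▸ h)
        (fun h => hsH₂ v hv fun f hf => huniq f hf ▸ h)
  exact ⟨hsat, Set.Subset.antisymm (Set.sInter_subset_of_mem ⟨hsat, subset_rfl⟩)
    (Set.subset_sInter fun _ hT => hT.2)⟩
end

section
/- For every graph E with finitely many vertices there exists a graph F with finitely many vertices such that: every infinite emitter of F emits infinitely many edges to any vertex it emits any edge to; every transition state of F has exactly one outgoing edge; and E ∼_ME F. Moreover, F can be obtained from E by finitely many applications of Move (O). -/
attribute [local instance] Classical.propDecidable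

namespace DirGraph

/-- Isomorphism of graphs. -/
def GraphIso (G H : DirGraph) : Prop :=
  ∃ (fV : G.V ≃ H.V) (fE : G.E ≃ H.E),
    (∀ e : G.E, H.s (fE e) = fV (G.s e)) ∧ ∀ e : G.E, H.r (fE e) = fV (G.r e)

/-- Data for Move (S): a regular source. -/
structure MoveSData (G : DirGraph) where
  w : G.V
  regular : G.Regular w
  source : ∀ e : G.E, G.r e ≠ w

/-- The graph obtained by removing the regular source `w`. -/
def MoveSData.graph {G : DirGraph} (d : MoveSData G) : DirGraph where
  V := {v : G.V // v ≠ d.w}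
  E := {e : G.E // G.s e ≠ d.w}
  s := fun e => ⟨G.s e.1, e.2⟩
  r := fun e => ⟨G.r e.1, d.source e.1⟩

def IsMoveS (G H : DirGraph) : Prop := ∃ d : MoveSData G, GraphIso d.graph H

/-- Data for Move (R): a regular vertex `w` with `s⁻¹(w) = {f}`, `r(f) ≠ w`, and all
edges into `w` emitted by the single vertex `x`. -/
structure MoveRData (G : DirGraph) where
  w : G.V
  f : G.E
  x : G.V
  hsf : ∀ e : G.E, G.s e = w ↔ e = f
  hrf : G.r f ≠ w
  hin : ∀ e : G.E, G.r e = w → G.s e = x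
  hne : ∃ e : G.E, G.r e = w

/-- The graph obtained by reducing at `w`: each edge `e` into `w` is replaced by an
edge from `x` to `r(f)`, and `w`, `f` are removed. -/
noncomputable def MoveRData.graph {G : DirGraph} (d : MoveRData G) : DirGraph where
  V := {v : G.V // v ≠ d.w}
  E := {e : G.E // e ≠ d.f}
  s := fun e => ⟨G.s e.1, fun hs => e.2 ((d.hsf e.1).mp hs)⟩
  r := fun e => if h : G.r e.1 = d.w then ⟨G.r d.f, d.hrf⟩ else ⟨G.r e.1, h⟩

def IsMoveR (G H : DirGraph) : Prop := ∃ d : MoveRData G, GraphIso d.graph H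

/-- Data for Move (O): a non-sink `w` and a partition of `s⁻¹(w)` into finitely many
nonempty sets, at most one of which is infinite. -/
structure MoveOData (G : DirGraph) where
  w : G.V
  notSink : ∃ e : G.E, G.s e = w
  nparts : ℕ
  P : {e : G.E // G.s e = w} → Fin nparts
  surj : Function.Surjective P
  oneInfinite : ∀ i j : Fin nparts,
    {e : {e : G.E // G.s e = w} | P e = i}.Infinite →
    {e : {e : G.E // G.s e = w} | P e = j}.Infinite → i = j

/-- The graph obtained from `G` by outsplitting at `w`. -/
noncomputable def MoveOData.graph {G : DirGraph} (d : MoveOData G) : DirGraph where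
  V := {v : G.V // v ≠ d.w} ⊕ Fin d.nparts
  E := {e : G.E // G.r e ≠ d.w} ⊕ ({e : G.E // G.r e = d.w} × Fin d.nparts)
  s := fun e =>
    match e with
    | .inl e => if h : G.s e.1 = d.w then .inr (d.P ⟨e.1, h⟩) else .inl ⟨G.s e.1, h⟩
    | .inr (e, _) => if h : G.s e.1 = d.w then .inr (d.P ⟨e.1, h⟩) else .inl ⟨G.s e.1, h⟩
  r := fun e =>
    match e with
    | .inl e => .inl ⟨G.r e.1, e.2⟩
    | .inr (_, i) => .inr i

def IsMoveO (G H : DirGraph) : Prop := ∃ d : MoveOData G, GraphIso d.graph H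

/-- Data for Move (I): a regular non-source `w` and a partition of `r⁻¹(w)` into
finitely many nonempty sets. -/
structure MoveIData (G : DirGraph) where
  w : G.V
  regular : G.Regular w
  notSource : ∃ e : G.E, G.r e = w
  nparts : ℕ
  P : {e : G.E // G.r e = w} → Fin nparts
  surj : Function.Surjective P

/-- The graph obtained from `G` by insplitting at `w`. -/
noncomputable def MoveIData.graph {G : DirGraph} (d : MoveIData G) : DirGraph where
  V := {v : G.V // v ≠ d.w} ⊕ Fin d.nparts
  E := {e : G.E // G.s e ≠ d.w} ⊕ ({e : G.E // G.s e = d.w} × Fin d.nparts)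
  s := fun e =>
    match e with
    | .inl e => .inl ⟨G.s e.1, e.2⟩
    | .inr (_, i) => .inr i
  r := fun e =>
    match e with
    | .inl e => if h : G.r e.1 = d.w then .inr (d.P ⟨e.1, h⟩) else .inl ⟨G.r e.1, h⟩
    | .inr (e, _) => if h : G.r e.1 = d.w then .inr (d.P ⟨e.1, h⟩) else .inl ⟨G.r e.1, h⟩

def IsMoveI (G H : DirGraph) : Prop := ∃ d : MoveIData G, GraphIso d.graph H

/-- Data for Move (C): a regular vertex supporting at least two distinct return paths. -/
structure MoveCData (G : DirGraph) where
  v : G.V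
  regular : G.Regular v
  twoRet : G.TwoReturnPaths v

/-- The graph obtained from `G` by Cuntz splicing at `v`: two new vertices `u₁, u₂`
and six new edges `v→u₁, u₁→v, u₁→u₁, u₁→u₂, u₂→u₁, u₂→u₂`. -/
def MoveCData.graph {G : DirGraph} (d : MoveCData G) : DirGraph where
  V := G.V ⊕ Fin 2
  E := G.E ⊕ Fin 6
  s := Sum.elim (fun e => Sum.inl (G.s e))
    (![Sum.inl d.v, Sum.inr 0, Sum.inr 0, Sum.inr 0, Sum.inr 1, Sum.inr 1])
  r := Sum.elim (fun e => Sum.inl (G.r e))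
    (![Sum.inr 0, Sum.inl d.v, Sum.inr 0, Sum.inr 1, Sum.inr 0, Sum.inr 1])

def IsMoveC (G H : DirGraph) : Prop := ∃ d : MoveCData G, GraphIso d.graph H

/-- An elementary step of move equivalence: graph isomorphism or one of the moves
(O), (I), (R), (S). -/
def ElemME (G H : DirGraph) : Prop :=
  GraphIso G H ∨ IsMoveO G H ∨ IsMoveI G H ∨ IsMoveR G H ∨ IsMoveS G H

/-- Move equivalence `∼_ME`: the equivalence relation generated by graph isomorphism
and moves (O), (I), (R), (S). -/
def MoveEquiv : DirGraph → DirGraph → Prop := Relation.EqvGen ElemME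

/-- An elementary step of Cuntz move equivalence. -/
def ElemCE (G H : DirGraph) : Prop := ElemME G H ∨ IsMoveC G H

/-- Cuntz move equivalence `∼_CE`: the equivalence relation generated by graph
isomorphism and moves (O), (I), (R), (S), (C). -/
def CuntzMoveEquiv : DirGraph → DirGraph → Prop := Relation.EqvGen ElemCE

/-- The plugged graph `E∧`: a loop is added at every sink. -/
def plug (G : DirGraph) : DirGraph where
  V := G.V
  E := G.E ⊕ {v : G.V // ∀ e : G.E, G.s e ≠ v}
  s := Sum.elim G.s Subtype.val
  r := Sum.elim G.r Subtype.val

end DirGraph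

namespace DirGraph

variable {G : DirGraph}

theorem GraphIso.refl (G : DirGraph) : GraphIso G G :=
  ⟨Equiv.refl _, Equiv.refl _, fun _ => rfl, fun _ => rfl⟩

theorem MoveEquiv.of_reflTransGen_isMoveO {H : DirGraph}
    (h : Relation.ReflTransGen IsMoveO G H) : MoveEquiv G H := by
  induction h with
  | refl => exact Relation.EqvGen.refl _
  | tail _ hstep ih => exact ih.trans _ _ _ (.rel _ _ (Or.inr (Or.inl hstep)))

namespace MoveOData

variable (d : MoveOData G)

theorem isMoveO_graph : IsMoveO G d.graph := ⟨d, GraphIso.refl _⟩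

/-- The map of vertices which identifies the copies of the split vertex. -/
def vertexProj : d.graph.V → G.V := Sum.elim Subtype.val fun _ => d.w

/-- The map of edges which identifies the copies of an edge into the split vertex. -/
def edgeProj : d.graph.E → G.E := Sum.elim Subtype.val fun p => p.1.1

/-- The vertex of the outsplit graph which emits the copies of a given edge. -/
noncomputable def liftSource (f : G.E) : d.graph.V :=
  if h : G.s f = d.w then .inr (d.P ⟨f, h⟩) else .inl ⟨G.s f, h⟩

instance [Finite G.V] : Finite d.graph.V :=
  inferInstanceAs (Finite ({v : G.V // v ≠ d.w} ⊕ Fin d.nparts))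

theorem graph_s (e : d.graph.E) : d.graph.s e = d.liftSource (d.edgeProj e) := by
  rcases e with e | ⟨e, i⟩ <;> rfl

theorem liftSource_of_eq {f : G.E} (h : G.s f = d.w) :
    d.liftSource f = .inr (d.P ⟨f, h⟩) := dif_pos h

theorem liftSource_of_ne {f : G.E} (h : G.s f ≠ d.w) :
    d.liftSource f = .inl ⟨G.s f, h⟩ := dif_neg h

theorem vertexProj_liftSource (f : G.E) : d.vertexProj (d.liftSource f) = G.s f := by
  by_cases h : G.s f = d.w
  · rw [d.liftSource_of_eq h]
    exact h.symm
  · rw [d.liftSource_of_ne h]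
    rfl

theorem vertexProj_s (e : d.graph.E) : d.vertexProj (d.graph.s e) = G.s (d.edgeProj e) := by
  rw [graph_s, vertexProj_liftSource]

theorem vertexProj_r (e : d.graph.E) : d.vertexProj (d.graph.r e) = G.r (d.edgeProj e) := by
  rcases e with e | ⟨e, i⟩
  · rfl
  · exact e.2.symm

theorem exists_edge_lift {f : G.E} {y : d.graph.V} (h : G.r f = d.vertexProj y) :
    ∃ e : d.graph.E, d.edgeProj e = f ∧ d.graph.r e = y := by
  rcases y with y | i
  · have hy : G.r f = y.1 := h
    exact ⟨.inl ⟨f, fun hf => y.2 (hy.symm.trans hf)⟩, rfl, congrArg Sum.inl (Subtype.ext hy)⟩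
  · exact ⟨.inr (⟨f, h⟩, i), rfl, rfl⟩

theorem edge_ext {e e' : d.graph.E} (hf : d.edgeProj e = d.edgeProj e')
    (hr : d.graph.r e = d.graph.r e') : e = e' := by
  rcases e with e | ⟨e, i⟩ <;> rcases e' with e' | ⟨e', i'⟩
  · exact congrArg Sum.inl (Subtype.ext hf)
  · cases hr
  · cases hr
  · cases hr
    exact congrArg (fun t => Sum.inr (t, i)) (Subtype.ext hf)

theorem eq_of_vertexProj_eq {x y : d.graph.V} (hx : d.vertexProj x ≠ d.w)
    (h : d.vertexProj x = d.vertexProj y) : x = y := by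
  rcases x with x | i
  · rcases y with y | j
    · exact congrArg Sum.inl (Subtype.ext h)
    · exact absurd h hx
  · exact absurd rfl hx

theorem exists_inr_of_vertexProj_eq {x : d.graph.V} (hx : d.vertexProj x = d.w) :
    ∃ i : Fin d.nparts, x = .inr i := by
  rcases x with x | i
  · exact absurd hx x.2
  · exact ⟨i, rfl⟩

theorem exists_vertexProj_eq (v : G.V) : ∃ x : d.graph.V, d.vertexProj x = v := by
  by_cases h : v = d.w
  · obtain ⟨e, he⟩ := d.notSink
    exact ⟨.inr (d.P ⟨e, he⟩), h.symm⟩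
  · exact ⟨.inl ⟨v, h⟩, rfl⟩

theorem liftSource_eq_iff {x : d.graph.V} (hx : d.vertexProj x ≠ d.w) (f : G.E) :
    d.liftSource f = x ↔ G.s f = d.vertexProj x := by
  refine ⟨fun h => by rw [← h, vertexProj_liftSource], fun h => ?_⟩
  refine (d.eq_of_vertexProj_eq hx ?_).symm
  rw [vertexProj_liftSource, h]

theorem liftSource_eq_inr_iff (i : Fin d.nparts) (f : G.E) :
    d.liftSource f = .inr i ↔ ∃ h : G.s f = d.w, d.P ⟨f, h⟩ = i := by
  by_cases h : G.s f = d.w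
  · rw [d.liftSource_of_eq h]
    exact ⟨fun hi => ⟨h, Sum.inr.inj hi⟩, fun ⟨_, hi⟩ => congrArg Sum.inr hi⟩
  · rw [d.liftSource_of_ne h]
    exact ⟨fun hi => (Sum.inl_ne_inr hi).elim, fun ⟨h', _⟩ => absurd h' h⟩

/-! ### Paths in the outsplit graph -/

theorem step_vertexProj {x y : d.graph.V} (h : d.graph.Step x y) :
    G.Step (d.vertexProj x) (d.vertexProj y) := by
  obtain ⟨e, rfl, rfl⟩ := h
  exact ⟨d.edgeProj e, (d.vertexProj_s e).symm, (d.vertexProj_r e).symm⟩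

theorem reach_vertexProj {x y : d.graph.V} (h : d.graph.Reach x y) :
    G.Reach (d.vertexProj x) (d.vertexProj y) :=
  Relation.ReflTransGen.lift d.vertexProj (fun _ _ => d.step_vertexProj) _ _ h

theorem exists_transGen_lift {u v : G.V} (h : Relation.TransGen G.Step u v) :
    ∀ y, d.vertexProj y = v → ∃ x, d.vertexProj x = u ∧ Relation.TransGen d.graph.Step x y := by
  have step : ∀ {a b : G.V}, G.Step a b → ∀ y, d.vertexProj y = b →
      ∃ x, d.vertexProj x = a ∧ d.graph.Step x y := by
    rintro _ _ ⟨f, rfl, rfl⟩ y hy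
    obtain ⟨e, rfl, rfl⟩ := d.exists_edge_lift hy.symm
    exact ⟨d.graph.s e, d.vertexProj_s e, e, rfl, rfl⟩
  induction h with
  | single h =>
    intro y hy
    obtain ⟨x, hx, hxy⟩ := step h y hy
    exact ⟨x, hx, .single hxy⟩
  | tail _ h ih =>
    intro y hy
    obtain ⟨z, hz, hzy⟩ := step h y hy
    obtain ⟨x, hx, hxz⟩ := ih z hz
    exact ⟨x, hx, hxz.tail hzy⟩

/-! ### Numbers of emitted edges in the outsplit graph -/

theorem infinite_liftSource [Finite G.V] {x : d.graph.V} (h : d.graph.InfiniteEmitter x) :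
    {f : G.E | d.liftSource f = x}.Infinite := by
  intro hfin
  refine h (((hfin.prod (Set.finite_univ (α := d.graph.V))).preimage
    (f := fun e => (d.edgeProj e, d.graph.r e)) ?_).subset ?_)
  · intro e _ e' _ hee
    exact d.edge_ext (Prod.ext_iff.1 hee).1 (Prod.ext_iff.1 hee).2
  · intro e he
    exact ⟨(d.graph_s e).symm.trans he, trivial⟩

theorem infinite_edges {x y : d.graph.V}
    (h : {f : G.E | d.liftSource f = x ∧ G.r f = d.vertexProj y}.Infinite) :
    {e : d.graph.E | d.graph.s e = x ∧ d.graph.r e = y}.Infinite := by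
  refine Set.Infinite.of_image d.edgeProj (h.mono ?_)
  rintro f ⟨hf, hr⟩
  obtain ⟨e, rfl, he⟩ := d.exists_edge_lift hr
  exact ⟨e, ⟨(d.graph_s e).trans hf, he⟩, rfl⟩

theorem existsUnique_edge {x : d.graph.V} {f : G.E} (hf : ∀ g, d.liftSource g = x ↔ g = f)
    (hr : G.r f ≠ d.w) : ∃! e : d.graph.E, d.graph.s e = x := by
  obtain ⟨y, hy⟩ := d.exists_vertexProj_eq (G.r f)
  obtain ⟨e, he, hey⟩ := d.exists_edge_lift hy.symm
  refine ⟨e, ?_, fun e' he' => ?_⟩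
  · change d.graph.s e = x
    rw [graph_s, he, hf]
  · have he'f : d.edgeProj e' = f := by
      rw [← hf, ← graph_s]
      exact he'
    refine d.edge_ext (he'f.trans he.symm) (d.eq_of_vertexProj_eq ?_ ?_)
    · rw [vertexProj_r, he'f]
      exact hr
    · rw [vertexProj_r, vertexProj_r, he'f, he]

theorem regular_vertexProj {x : d.graph.V} (hx : d.vertexProj x ≠ d.w)
    (h : d.graph.Regular x) : G.Regular (d.vertexProj x) := by
  obtain ⟨hfin, e, he⟩ := h
  refine ⟨(hfin.image d.edgeProj).subset ?_, d.edgeProj e, ?_⟩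
  · intro f hf
    obtain ⟨y, hy⟩ := d.exists_vertexProj_eq (G.r f)
    obtain ⟨e, rfl, -⟩ := d.exists_edge_lift hy.symm
    exact ⟨e, by rw [Set.mem_ofPred_eq, graph_s, d.liftSource_eq_iff hx]; exact hf, rfl⟩
  · rw [Set.mem_ofPred_eq, ← vertexProj_s]
    exact congrArg d.vertexProj he

theorem transitionState_vertexProj {x : d.graph.V} (hx : d.vertexProj x ≠ d.w)
    (h : d.graph.TransitionState x) : G.TransitionState (d.vertexProj x) := by
  refine ⟨d.regular_vertexProj hx h.1, fun hc => h.2 ?_⟩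
  obtain ⟨z, hz, hzx⟩ := d.exists_transGen_lift hc x rfl
  rwa [← d.eq_of_vertexProj_eq hx hz.symm] at hzx

end MoveOData

/-! ### Infinite emitters -/

/-- If `v` is an infinite emitter, it emits infinitely many edges to each vertex it
emits any edge to. -/
def UniformEmitter (G : DirGraph) (v : G.V) : Prop :=
  G.InfiniteEmitter v → ∀ u : G.V,
    (∃ e : G.E, G.s e = v ∧ G.r e = u) → {e : G.E | G.s e = v ∧ G.r e = u}.Infinite

theorem MoveOData.infiniteEmitter_vertexProj [Finite G.V] (d : MoveOData G) {x : d.graph.V}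
    (h : d.graph.InfiniteEmitter x) : G.InfiniteEmitter (d.vertexProj x) :=
  (d.infinite_liftSource h).mono fun f hf => by
    rw [Set.mem_ofPred_eq, ← d.vertexProj_liftSource f]
    exact congrArg d.vertexProj hf

theorem MoveOData.uniformEmitter_of_vertexProj [Finite G.V] (d : MoveOData G) {x : d.graph.V}
    (hx : d.vertexProj x ≠ d.w) (h : G.UniformEmitter (d.vertexProj x)) :
    d.graph.UniformEmitter x := by
  rintro hinf y ⟨e, he, rfl⟩
  refine d.infinite_edges ?_
  simp_rw [d.liftSource_eq_iff hx]
  refine h (d.infiniteEmitter_vertexProj hinf) _ ⟨d.edgeProj e, ?_, (d.vertexProj_r e).symm⟩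
  rw [← d.vertexProj_s, he]

/-- The edges emitted by `w` whose range receives infinitely many edges from `w` form the
first part of a partition, the other edges the second part. -/
theorem exists_moveO_uniformEmitter [Finite G.V] {w : G.V} (hw : ¬ G.UniformEmitter w) :
    ∃ d : MoveOData G, d.w = w ∧ ∀ x, d.vertexProj x = w → d.graph.UniformEmitter x := by
  simp only [UniformEmitter, not_forall] at hw
  obtain ⟨hinf, u, ⟨e₁, he₁, hu⟩, hfin⟩ := hw
  let Q : G.E → Prop := fun e => {f : G.E | G.s f = w ∧ G.r f = G.r e}.Infinite
  have hQfin : {e : G.E | G.s e = w ∧ ¬ Q e}.Finite := by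
    refine Set.Finite.subset (Set.finite_iUnion fun v : G.V =>
      (show {e : G.E | (G.s e = w ∧ G.r e = v) ∧ ¬ Q e}.Finite from ?_))
      fun e he => Set.mem_iUnion.2 ⟨G.r e, ⟨he.1, rfl⟩, he.2⟩
    by_cases hv : {e : G.E | G.s e = w ∧ G.r e = v}.Finite
    · exact hv.subset fun e he => he.1
    · refine Set.finite_empty.subset fun e he => he.2 ?_
      change Set.Infinite _
      rw [he.1.2]
      exact hv
  obtain ⟨e₀, he₀, hQ₀⟩ : ∃ e, G.s e = w ∧ Q e := by
    by_contra hne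
    push Not at hne
    exact hinf (hQfin.subset fun e he => ⟨he, hne e he⟩)
  have hQ₁ : ¬ Q e₁ := by
    change ¬ Set.Infinite _
    rw [hu]
    exact hfin
  let d : MoveOData G :=
    { w := w
      notSink := ⟨e₀, he₀⟩
      nparts := 2
      P := fun e => if Q e.1 then 0 else 1
      surj := by
        intro i
        fin_cases i
        · exact ⟨⟨e₀, he₀⟩, if_pos hQ₀⟩
        · exact ⟨⟨e₁, he₁⟩, if_neg hQ₁⟩
      oneInfinite := by
        have key : ∀ i : Fin 2,
            {e : {e : G.E // G.s e = w} | (if Q e.1 then (0 : Fin 2) else 1) = i}.Infinite →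
            i = 0 := by
          intro i hi
          by_contra hi0
          refine hi ((hQfin.preimage (f := Subtype.val) Subtype.val_injective.injOn).subset ?_)
          intro e he
          refine ⟨e.2, fun hQ => hi0 ?_⟩
          rw [← show _ = i from he, if_pos hQ]
        intro i j hi hj
        rw [key i hi, key j hj] }
  have hP : ∀ (i : Fin 2) (f : G.E), d.liftSource f = .inr i ↔
      G.s f = w ∧ (if Q f then (0 : Fin 2) else 1) = i := fun i f =>
    (d.liftSource_eq_inr_iff i f).trans
      ⟨fun ⟨hs, hi⟩ => ⟨hs, hi⟩, fun ⟨hs, hi⟩ => ⟨hs, hi⟩⟩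
  refine ⟨d, rfl, fun x hx => ?_⟩
  obtain ⟨i, rfl⟩ := d.exists_inr_of_vertexProj_eq hx
  rintro hxinf y ⟨e, he, rfl⟩
  have hi : i = 0 := by
    by_contra hi0
    refine d.infinite_liftSource hxinf (hQfin.subset fun f hf => ?_)
    obtain ⟨hs, hf⟩ := (hP i f).1 hf
    exact ⟨hs, fun hQ => hi0 (by rw [← hf, if_pos hQ])⟩
  subst hi
  rw [d.graph_s] at he
  have hQe : Q (d.edgeProj e) := by
    by_contra hQ
    have := ((hP 0 _).1 he).2
    rw [if_neg hQ] at this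
    exact one_ne_zero this
  refine d.infinite_edges (Set.Infinite.mono ?_ hQe)
  rintro f ⟨hfs, hfr⟩
  have hQf : Q f := by
    change Set.Infinite _
    rw [hfr]
    exact hQe
  exact ⟨(hP 0 f).2 ⟨hfs, if_pos hQf⟩, hfr.trans (d.vertexProj_r e).symm⟩

/-- If the split vertex lies in `S` and all vertices of `T` project to other vertices of `S`,
then `T` has fewer elements than `S`. -/
theorem MoveOData.ncard_lt [Finite G.V] (d : MoveOData G) {S : Set G.V} {T : Set d.graph.V}
    (hw : d.w ∈ S) (hT : ∀ x ∈ T, d.vertexProj x ≠ d.w ∧ d.vertexProj x ∈ S) :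
    T.ncard < S.ncard := by
  have hinj : Set.InjOn d.vertexProj T := fun x hx y _ h => d.eq_of_vertexProj_eq (hT x hx).1 h
  rw [← hinj.ncard_image]
  refine Set.ncard_lt_ncard ⟨?_, fun h => ?_⟩
  · rintro _ ⟨x, hx, rfl⟩
    exact (hT x hx).2
  · obtain ⟨x, hx, hxw⟩ := h hw
    exact (hT x hx).1 hxw

theorem exists_moveO_uniform (G : DirGraph) (hG : Finite G.V) :
    ∃ F : DirGraph, Finite F.V ∧ (∀ v, F.UniformEmitter v) ∧
      Relation.ReflTransGen IsMoveO G F := by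
  induction hn : {v | ¬ G.UniformEmitter v}.ncard using Nat.strong_induction_on generalizing G with
  | _ n ih =>
    by_cases hall : ∀ v, G.UniformEmitter v
    · exact ⟨G, hG, hall, .refl⟩
    push Not at hall
    obtain ⟨w, hw⟩ := hall
    obtain ⟨d, rfl, hd⟩ := exists_moveO_uniformEmitter hw
    obtain ⟨F, hF, hFu, hGF⟩ := ih _ (hn ▸ d.ncard_lt
      (T := {v | ¬ d.graph.UniformEmitter v}) hw fun x hx => by
        have hxw : d.vertexProj x ≠ d.w := fun h => hx (hd x h)
        exact ⟨hxw, fun h => hx (d.uniformEmitter_of_vertexProj hxw h)⟩) d.graph inferInstance rfl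
    exact ⟨F, hF, hFu, .head d.isMoveO_graph hGF⟩

/-! ### Transition states -/

/-- A transition state not emitting exactly one edge. -/
def BranchingState (G : DirGraph) (v : G.V) : Prop :=
  G.TransitionState v ∧ ¬ ∃! e : G.E, G.s e = v

theorem exists_last_branchingState [Finite G.V] (h : ∃ v, G.BranchingState v) :
    ∃ w, G.BranchingState w ∧ ∀ v, Relation.TransGen G.Step w v → ¬ G.BranchingState v := by
  let R : {v // G.BranchingState v} → {v // G.BranchingState v} → Prop :=
    fun a b => Relation.TransGen G.Step b.1 a.1
  have : IsTrans _ R := ⟨fun _ _ _ hab hbc => hbc.trans hab⟩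
  have : Std.Irrefl R := ⟨fun a ha => a.2.1.2 ha⟩
  obtain ⟨v, hv⟩ := h
  obtain ⟨w, -, hw⟩ := (Finite.wellFounded_of_trans_of_irrefl R).has_min Set.univ ⟨⟨v, hv⟩, trivial⟩
  exact ⟨w.1, w.2, fun v hwv hv => hw ⟨v, hv⟩ trivial hwv⟩

/-- The outsplit of a regular vertex into vertices emitting one original edge each. -/
theorem exists_moveO_singletons {w : G.V} (hw : G.Regular w) :
    ∃ d : MoveOData G, d.w = w ∧ Function.Injective d.P := by
  obtain ⟨hfin, e, he⟩ := hw
  have : Finite {e : G.E // G.s e = w} := hfin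
  let P := Finite.equivFin {e : G.E // G.s e = w}
  exact ⟨⟨w, ⟨e, he⟩, _, P, P.surjective, fun _ _ h => absurd (Set.toFinite _) h⟩, rfl,
    P.injective⟩

theorem MoveOData.existsUnique_edge_of_injective (d : MoveOData G) (hP : Function.Injective d.P)
    (hw : ¬ G.SupportsCycle d.w) {x : d.graph.V} (hx : d.vertexProj x = d.w) :
    ∃! e : d.graph.E, d.graph.s e = x := by
  obtain ⟨i, rfl⟩ := d.exists_inr_of_vertexProj_eq hx
  obtain ⟨⟨f, hf⟩, rfl⟩ := d.surj i
  refine d.existsUnique_edge (f := f) (fun g => ?_) fun hr => hw (.single ⟨f, hf, hr⟩)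
  rw [d.liftSource_eq_inr_iff]
  refine ⟨fun ⟨_, hi⟩ => Subtype.ext_iff.1 (hP hi), ?_⟩
  rintro rfl
  exact ⟨hf, rfl⟩

theorem MoveOData.existsUnique_edge_of_vertexProj (d : MoveOData G) {x : d.graph.V}
    (hx : d.vertexProj x ≠ d.w) (h : ∃! e : G.E, G.s e = d.vertexProj x)
    (hstep : ¬ G.Step (d.vertexProj x) d.w) : ∃! e : d.graph.E, d.graph.s e = x := by
  obtain ⟨f, hf, huniq⟩ := h
  refine d.existsUnique_edge (f := f) (fun g => ?_) fun hr => hstep ⟨f, hf, hr⟩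
  rw [d.liftSource_eq_iff hx]
  refine ⟨huniq g, ?_⟩
  rintro rfl
  exact hf

/-- The transition states from which some branching state can be reached. -/
def preBranching (G : DirGraph) : Set G.V :=
  {v | G.TransitionState v ∧ ∃ u, G.Reach v u ∧ G.BranchingState u}

theorem MoveOData.ncard_preBranching_lt [Finite G.V] (d : MoveOData G)
    (hP : Function.Injective d.P) (hw : G.BranchingState d.w)
    (hlast : ∀ v, Relation.TransGen G.Step d.w v → ¬ G.BranchingState v) :
    d.graph.preBranching.ncard < G.preBranching.ncard := by
  refine d.ncard_lt ⟨hw.1, d.w, .refl, hw⟩ ?_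
  rintro x ⟨hx, y, hxy, hy, hybranch⟩
  have hyw : d.vertexProj y ≠ d.w := fun h =>
    hybranch (d.existsUnique_edge_of_injective hP hw.1.2 h)
  have hyt := d.transitionState_vertexProj hyw hy
  have hreach := d.reach_vertexProj hxy
  have hy' : G.BranchingState (d.vertexProj y) ∨ G.Step (d.vertexProj y) d.w := by
    by_contra! hne
    refine hybranch (d.existsUnique_edge_of_vertexProj hyw ?_ hne.2)
    by_contra huniq
    exact hne.1 ⟨hyt, huniq⟩
  have hxw : d.vertexProj x ≠ d.w := by
    intro h
    rw [h] at hreach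
    have hwy : Relation.TransGen G.Step d.w (d.vertexProj y) :=
      (Relation.reflTransGen_iff_eq_or_transGen.1 hreach).resolve_left hyw
    exact hy'.elim (hlast _ hwy) fun hstep => hw.1.2 (hwy.tail hstep)
  refine ⟨hxw, d.transitionState_vertexProj hxw hx, ?_⟩
  exact hy'.elim (fun hb => ⟨_, hreach, hb⟩) fun hstep => ⟨d.w, hreach.tail hstep, hw⟩

theorem exists_moveO_not_branchingState (G : DirGraph) (hG : Finite G.V)
    (hu : ∀ v, G.UniformEmitter v) :
    ∃ F : DirGraph, Finite F.V ∧ (∀ v, F.UniformEmitter v) ∧ (∀ v, ¬ F.BranchingState v) ∧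
      Relation.ReflTransGen IsMoveO G F := by
  induction hn : G.preBranching.ncard using Nat.strong_induction_on generalizing G with
  | _ n ih =>
    by_cases hall : ∀ v, ¬ G.BranchingState v
    · exact ⟨G, hG, hu, hall, .refl⟩
    push Not at hall
    obtain ⟨w, hw, hlast⟩ := exists_last_branchingState hall
    obtain ⟨d, rfl, hP⟩ := exists_moveO_singletons hw.1.1
    have hdu : ∀ x, d.graph.UniformEmitter x := by
      intro x
      by_cases hxw : d.vertexProj x = d.w
      · intro hinf
        exact absurd hw.1.1.1 (hxw ▸ d.infiniteEmitter_vertexProj hinf)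
      · exact d.uniformEmitter_of_vertexProj hxw (hu _)
    obtain ⟨F, hF, hFu, hFb, hGF⟩ :=
      ih _ (hn ▸ d.ncard_preBranching_lt hP hw hlast) d.graph inferInstance hdu rfl
    exact ⟨F, hF, hFu, hFb, .head d.isMoveO_graph hGF⟩

end DirGraph

open DirGraph in
/-- Lemma `lem:structure-2(iv)`: every graph with finitely many vertices
is move equivalent — in fact via finitely many applications of Move (O) — to a graph
with finitely many vertices in which every infinite emitter emits infinitely many edges
to any vertex it emits any edge to, and every transition state has exactly one outgoing
edge. -/
theorem stmt6 (E : DirGraph) (hcE : Countable E.E) (hfin : Finite E.V) :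
    ∃ F : DirGraph, Finite F.V ∧
      (∀ v : F.V, F.InfiniteEmitter v → ∀ u : F.V,
        (∃ e : F.E, F.s e = v ∧ F.r e = u) → {e : F.E | F.s e = v ∧ F.r e = u}.Infinite) ∧
      (∀ v : F.V, F.TransitionState v → ∃! e : F.E, F.s e = v) ∧
      MoveEquiv E F ∧
      Relation.ReflTransGen IsMoveO E F := by
  obtain ⟨H, hH, hHu, hEH⟩ := exists_moveO_uniform E hfin
  obtain ⟨F, hF, hFu, hFb, hHF⟩ := exists_moveO_not_branchingState H hH hHu
  exact ⟨F, hF, hFu, fun v hv => by_contra fun h => hFb v ⟨hv, h⟩,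
    MoveEquiv.of_reflTransGen_isMoveO (hEH.trans hHF), hEH.trans hHF⟩
end

section
/- Let E be a graph with finitely many vertices. Then E has no vertex supporting two distinct return paths if and only if τ_E(γ) ≤ 0 for every component γ ∈ Γ_E. -/
attribute [local instance] Classical.propDecidable

namespace DirGraph

/-- A path ending at `v` makes `v` reachable from the range of its first edge. -/
theorem reach_of_isPathChain {G : DirGraph} {v : G.V} (p : List G.E) :
    ∀ e : G.E, G.IsPathChain (e :: p) →
      G.r ((e :: p).getLast (List.cons_ne_nil e p)) = v → G.Reach (G.r e) v := by
  induction p with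
  | nil =>
    intro e _ h
    rw [← h]
    exact Relation.ReflTransGen.refl
  | cons f p ih =>
    intro e hc h
    obtain ⟨hef, hc⟩ := List.isChain_cons_cons.1 hc
    exact Relation.ReflTransGen.head ⟨f, hef.symm, rfl⟩ (ih f hc (by simpa using h))

/-- An edge emitted by `v` from whose range `v` is reachable begins a return path at `v`. -/
theorem exists_isReturnPath_cons {G : DirGraph} {v : G.V} {e : G.E} (hs : G.s e = v)
    (hr : G.Reach (G.r e) v) : ∃ p, G.IsReturnPath v (e :: p) := by
  have key : ∀ u, G.Reach u v → ∀ e : G.E, G.r e = u → ∃ p : List G.E,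
      G.IsPathChain (e :: p) ∧ G.r ((e :: p).getLast (List.cons_ne_nil e p)) = v ∧
        ∀ x ∈ (e :: p).dropLast, G.r x ≠ v := by
    intro u hu
    induction hu using Relation.ReflTransGen.head_induction_on with
    | refl => exact fun e he => ⟨[], List.isChain_singleton e, he, by simp⟩
    | head hstep _ ih =>
      intro e he
      by_cases hv : G.r e = v
      · exact ⟨[], List.isChain_singleton e, hv, by simp⟩
      · obtain ⟨f, hf, hfr⟩ := hstep
        obtain ⟨p, hc, hl, hd⟩ := ih f hfr
        refine ⟨f :: p, List.isChain_cons_cons.2 ⟨he.trans hf.symm, hc⟩, by simpa using hl, ?_⟩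
        rw [List.dropLast_cons_of_ne_nil (List.cons_ne_nil f p)]
        exact List.forall_mem_cons.2 ⟨hv, hd⟩
  obtain ⟨p, hc, hl, hd⟩ := key _ hr e rfl
  exact ⟨p, List.cons_ne_nil e p, hc, hs, hl, hd⟩

/-- If every vertex reachable from `v` emits at most one edge leading back to `v`, then paths
that stop at their first visit to `v` are determined by their source. -/
theorem eq_of_source_eq {G : DirGraph} {v : G.V}
    (hinj : ∀ e f : G.E, G.s e = G.s f → G.Reach v (G.s e) → G.Reach (G.r e) v →
      G.Reach (G.r f) v → e = f) (p : List G.E) :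
    ∀ (q : List G.E) (e f : G.E), G.s e = G.s f → G.Reach v (G.s e) →
      G.IsPathChain (e :: p) → G.IsPathChain (f :: q) →
      G.r ((e :: p).getLast (List.cons_ne_nil e p)) = v →
      G.r ((f :: q).getLast (List.cons_ne_nil f q)) = v →
      (∀ x ∈ (e :: p).dropLast, G.r x ≠ v) → (∀ x ∈ (f :: q).dropLast, G.r x ≠ v) →
      e :: p = f :: q := by
  induction p with
  | nil =>
    intro q e f hs hv hcp hcq hlp hlq hdp hdq
    obtain rfl := hinj e f hs hv (reach_of_isPathChain _ e hcp hlp)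
      (reach_of_isPathChain _ f hcq hlq)
    cases q with
    | nil => rfl
    | cons f' q => exact absurd hlp (hdq e (by simp))
  | cons e' p ih =>
    intro q e f hs hv hcp hcq hlp hlq hdp hdq
    obtain rfl := hinj e f hs hv (reach_of_isPathChain _ e hcp hlp)
      (reach_of_isPathChain _ f hcq hlq)
    cases q with
    | nil => exact absurd hlq (hdp e (by simp))
    | cons f' q =>
      obtain ⟨he, hcp⟩ := List.isChain_cons_cons.1 hcp
      obtain ⟨hf, hcq⟩ := List.isChain_cons_cons.1 hcq
      rw [ih q e' f' (he.symm.trans hf) (hv.tail ⟨e, rfl, he⟩) hcp hcq (by simpa using hlp)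
        (by simpa using hlq) (fun x hx => hdp x (List.mem_cons_of_mem e hx))
        (fun x hx => hdq x (List.mem_cons_of_mem e hx))]

/-- The temperature is nonpositive exactly when there are finitely many internal edges, at most
as many as vertices. -/
theorem temp_nonpos_iff {G : DirGraph} {γ : Set G.V} :
    G.temp γ ≤ 0 ↔ {e : G.E | G.s e ∈ γ ∧ G.r e ∈ γ}.Finite ∧
      Nat.card {e : G.E | G.s e ∈ γ ∧ G.r e ∈ γ} ≤ Nat.card γ := by
  unfold temp
  split_ifs with h
  · exact iff_of_false (by norm_num) fun h' => h h'.1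
  · rw [Int.sign_nonpos_iff, sub_nonpos, Nat.cast_le]
    exact (and_iff_right (Set.not_infinite.1 h)).symm

/-- A component of a graph without two return paths at any vertex has temperature at most `0`. -/
theorem temp_nonpos_of_isComponent {G : DirGraph} [Finite G.V]
    (hG : ∀ v : G.V, ¬ G.TwoReturnPaths v) {γ : Set G.V} (hγ : G.IsComponent γ) :
    G.temp γ ≤ 0 := by
  let src : {e : G.E | G.s e ∈ γ ∧ G.r e ∈ γ} → γ := fun e => ⟨G.s e, e.2.1⟩
  have hinj : Function.Injective src := by
    rintro ⟨e, he⟩ ⟨f, hf⟩ hef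
    have hs : G.s e = G.s f := congrArg Subtype.val hef
    rcases hγ with ⟨⟨_, hconn⟩, _⟩ | ⟨v, rfl, _, hv⟩
    · by_contra hne
      obtain ⟨p, hp⟩ := exists_isReturnPath_cons rfl (hconn _ he.2 _ he.1).to_reflTransGen
      obtain ⟨q, hq⟩ := exists_isReturnPath_cons hs.symm (hconn _ hf.2 _ he.1).to_reflTransGen
      exact hG _ ⟨_, _, hp, hq, fun h => hne (Subtype.ext (List.cons.inj h).1)⟩
    · exact absurd (Relation.TransGen.single ⟨e, he.1, he.2⟩) hv
  exact temp_nonpos_iff.2 ⟨Set.finite_coe_iff.1 (Finite.of_injective src hinj),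
    Nat.card_le_card_of_injective src hinj⟩

/-- The strongly connected component of a vertex supporting a cycle. -/
theorem isComponent_setOf_transGen {G : DirGraph} {v : G.V} (hv : G.SupportsCycle v) :
    G.IsComponent {u | Relation.TransGen G.Step v u ∧ Relation.TransGen G.Step u v} := by
  refine Or.inl ⟨⟨⟨v, hv, hv⟩, fun u hu w hw => hu.2.trans hw.1⟩, fun δ hδ hsub => ?_⟩
  exact (hsub.antisymm fun u hu => ⟨hδ.2 _ (hsub ⟨hv, hv⟩) _ hu, hδ.2 _ hu _ (hsub ⟨hv, hv⟩)⟩).symm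

/-- A vertex whose component has temperature at most `0` does not support two return paths. -/
theorem not_twoReturnPaths_of_temp_nonpos {G : DirGraph} [Finite G.V]
    (hG : ∀ γ : Set G.V, G.IsComponent γ → G.temp γ ≤ 0) (v : G.V) : ¬ G.TwoReturnPaths v := by
  rintro ⟨p, q, ⟨hp, hcp, hsp, hlp, hdp⟩, ⟨hq, hcq, hsq, hlq, hdq⟩, hne⟩
  obtain ⟨e, p, rfl⟩ := List.exists_cons_of_ne_nil hp
  obtain ⟨f, q, rfl⟩ := List.exists_cons_of_ne_nil hq
  have hv : G.SupportsCycle v :=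
    Relation.TransGen.head' ⟨e, hsp, rfl⟩ (reach_of_isPathChain p e hcp hlp)
  let γ : Set G.V := {u | Relation.TransGen G.Step v u ∧ Relation.TransGen G.Step u v}
  obtain ⟨hfin, hcard⟩ := temp_nonpos_iff.1 (hG γ (isComponent_setOf_transGen hv))
  let src : {e : G.E | G.s e ∈ γ ∧ G.r e ∈ γ} → γ := fun e => ⟨G.s e, e.2.1⟩
  have hsurj : Function.Surjective src := by
    rintro ⟨u, hu⟩
    obtain ⟨w, ⟨g, hgs, hgr⟩, hw⟩ := Relation.TransGen.head'_iff.1 hu.2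
    subst hgs hgr
    exact ⟨⟨g, hu, hu.1.tail ⟨g, rfl, rfl⟩, Relation.TransGen.trans_right hw hv⟩, rfl⟩
  have := hfin.to_subtype
  have hinj : Function.Injective src :=
    (hsurj.bijective_of_nat_card_le hcard).1
  have mem : ∀ g : G.E, G.Reach v (G.s g) → G.Reach (G.r g) v → G.s g ∈ γ ∧ G.r g ∈ γ :=
    fun g hs hr => ⟨⟨Relation.TransGen.trans_left hv hs, Relation.TransGen.head' ⟨g, rfl, rfl⟩ hr⟩,
      Relation.TransGen.tail' hs ⟨g, rfl, rfl⟩, Relation.TransGen.trans_right hr hv⟩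
  refine hne (eq_of_source_eq (fun g g' hs hv hr hr' => ?_) p q e f (hsp.trans hsq.symm)
    (by rw [show G.s e = v from hsp]; exact Relation.ReflTransGen.refl) hcp hcq hlp hlq hdp hdq)
  exact congrArg Subtype.val
    (hinj (Subtype.ext hs : src ⟨g, mem g hv hr⟩ = src ⟨g', mem g' (hs ▸ hv) hr'⟩))

end DirGraph

open DirGraph in
/-- Lemma `charKH(ii)`: a graph with finitely many vertices has no vertex
supporting two distinct return paths iff `τ_E(γ) ≤ 0` for every component `γ ∈ Γ_E`. -/
theorem stmt8 (G : DirGraph) (hcE : Countable G.E) (hfin : Finite G.V) :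
    (∀ v : G.V, ¬ G.TwoReturnPaths v) ↔
      ∀ γ : Set G.V, G.IsComponent γ → G.temp γ ≤ 0 := by
  exact ⟨fun h _ hγ => temp_nonpos_of_isComponent h hγ,
    fun h v => not_twoReturnPaths_of_temp_nonpos h v⟩
end

section
/- Let E and F be graphs with finitely many vertices. If E ∼_CE F, then E∧ ∼_CE F∧; and if E ∼_ME F, then E∧ ∼_ME F∧. -/
attribute [local instance] Classical.propDecidable

namespace DirGraph

theorem GraphIso.symm {G H : DirGraph} : GraphIso G H → GraphIso H G := by
  rintro ⟨fV, fE, hs, hr⟩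
  refine ⟨fV.symm, fE.symm, fun e => ?_, fun e => ?_⟩
  · rw [Equiv.eq_symm_apply, ← hs, Equiv.apply_symm_apply]
  · rw [Equiv.eq_symm_apply, ← hr, Equiv.apply_symm_apply]

theorem GraphIso.trans {G H K : DirGraph} : GraphIso G H → GraphIso H K → GraphIso G K := by
  rintro ⟨fV, fE, hs, hr⟩ ⟨gV, gE, ks, kr⟩
  exact ⟨fV.trans gV, fE.trans gE, fun e => by simp [hs, ks], fun e => by simp [hr, kr]⟩

/-- A graph `H` is isomorphic to `plug K` as soon as it consists of a copy of `K` together with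
one loop at each sink of `K`. -/
theorem graphIso_plug_of_loops {K H : DirGraph} (fV : K.V ≃ H.V) (g : K.E → H.E)
    (l : {v : K.V // ∀ e : K.E, K.s e ≠ v} → H.E) (hg : Function.Injective g)
    (hs : ∀ e, H.s (g e) = fV (K.s e)) (hr : ∀ e, H.r (g e) = fV (K.r e))
    (ls : ∀ v, H.s (l v) = fV v.1) (lr : ∀ v, H.r (l v) = fV v.1)
    (hcov : ∀ e, (∃ e₀, g e₀ = e) ∨ ∃ v, l v = e) : GraphIso H (plug K) := by
  have hl : Function.Injective l := fun v v' h =>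
    Subtype.ext (fV.injective (by rw [← ls, ← ls, h]))
  have hbij : Function.Bijective (Sum.elim g l) := by
    refine ⟨hg.sumElim hl fun e v h => v.2 e (fV.injective ?_), fun e => ?_⟩
    · rw [← hs, ← ls, h]
    · rcases hcov e with ⟨a, rfl⟩ | ⟨v, rfl⟩
      · exact ⟨.inl a, rfl⟩
      · exact ⟨.inr v, rfl⟩
  refine GraphIso.symm ⟨fV, Equiv.ofBijective _ hbij, ?_, ?_⟩
  · rintro (e | v)
    · exact hs e
    · exact ls v
  · rintro (e | v)
    · exact hr e
    · exact lr v

theorem GraphIso.plug {G H : DirGraph} (h : GraphIso G H) : GraphIso (plug G) (plug H) := by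
  obtain ⟨fV, fE, hs, hr⟩ := h.symm
  have hsink (v : H.V) (hv : ∀ e, H.s e ≠ v) (e : G.E) : G.s e ≠ fV v := fun he =>
    hv (fE.symm e) (fV.injective (by rw [← hs, Equiv.apply_symm_apply, he]))
  refine graphIso_plug_of_loops (H := G.plug) fV (fun e => .inl (fE e))
    (fun v => .inr ⟨fV v.1, hsink v.1 v.2⟩)
    (Sum.inl_injective.comp fE.injective) hs hr (fun _ => rfl) (fun _ => rfl) ?_
  rintro (e | ⟨v, hv⟩)
  · exact .inl ⟨fE.symm e, congrArg Sum.inl (fE.apply_symm_apply e)⟩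
  · refine .inr ⟨⟨fV.symm v, fun e he => hv (fE e) (by rw [hs, he, Equiv.apply_symm_apply])⟩, ?_⟩
    exact congrArg Sum.inr (Subtype.ext (fV.apply_symm_apply v))

theorem sink_ne_of_emits {G : DirGraph} {w : G.V} (hw : ∃ e, G.s e = w)
    (v : {v : G.V // ∀ e : G.E, G.s e ≠ v}) : v.1 ≠ w := by
  rintro rfl
  obtain ⟨e, he⟩ := hw
  exact v.2 e he

theorem Regular.plug {G : DirGraph} {w : G.V} (hw : G.Regular w) : G.plug.Regular w := by
  refine ⟨(hw.1.image Sum.inl).subset ?_, hw.2.imp' Sum.inl fun _ h => h⟩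
  rintro (e | v) h
  · exact ⟨e, h, rfl⟩
  · exact absurd h (sink_ne_of_emits hw.2 v)

theorem IsMoveS.plug {G H : DirGraph} : IsMoveS G H → IsMoveS (plug G) (plug H) := by
  rintro ⟨d, hd⟩
  have hne := sink_ne_of_emits d.regular.2
  have hsink (v : d.graph.V) (hv : ∀ e, d.graph.s e ≠ v) (e : G.E) : G.s e ≠ v.1 := fun he =>
    hv ⟨e, he ▸ v.2⟩ (Subtype.ext he)
  let d' : MoveSData G.plug :=
    { w := d.w
      regular := d.regular.plug
      source := by
        rintro (e | v)
        · exact d.source e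
        · exact hne v }
  refine ⟨d', GraphIso.trans ?_ hd.plug⟩
  refine graphIso_plug_of_loops (K := d.graph) (H := d'.graph) (Equiv.refl _)
    (fun e => ⟨.inl e.1, e.2⟩) (fun v => ⟨.inr ⟨v.1.1, hsink v.1 v.2⟩, v.1.2⟩)
    ?_ (fun _ => rfl) (fun _ => rfl) (fun _ => rfl) (fun _ => rfl) ?_
  · intro a b hab
    exact Subtype.ext (Sum.inl_injective (congrArg Subtype.val hab))
  · rintro ⟨e | v, he⟩
    · exact .inl ⟨⟨e, he⟩, rfl⟩
    · exact .inr ⟨⟨⟨v.1, he⟩, fun e h => v.2 e.1 (congrArg Subtype.val h)⟩, rfl⟩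

theorem IsMoveR.plug {G H : DirGraph} : IsMoveR G H → IsMoveR (plug G) (plug H) := by
  rintro ⟨d, hd⟩
  have hf : G.s d.f = d.w := (d.hsf d.f).2 rfl
  have hne := sink_ne_of_emits ⟨d.f, hf⟩
  have hsink (v : d.graph.V) (hv : ∀ e, d.graph.s e ≠ v) (e : G.E) : G.s e ≠ v.1 := fun he =>
    hv ⟨e, fun h => v.2 (by rw [← he, h, hf])⟩ (Subtype.ext he)
  let d' : MoveRData G.plug :=
    { w := d.w
      f := .inl d.f
      x := d.x
      hsf := by
        rintro (e | v)
        · exact (d.hsf e).trans Sum.inl_injective.eq_iff.symm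
        · exact iff_of_false (hne v) Sum.inr_ne_inl
      hrf := d.hrf
      hin := by
        rintro (e | v) h
        · exact d.hin e h
        · exact absurd h (hne v)
      hne := d.hne.imp' Sum.inl fun _ h => h }
  refine ⟨d', GraphIso.trans ?_ hd.plug⟩
  refine graphIso_plug_of_loops (K := d.graph) (H := d'.graph) (Equiv.refl _)
    (fun e => ⟨.inl e.1, fun h => e.2 (Sum.inl_injective h)⟩)
    (fun v => ⟨.inr ⟨v.1.1, hsink v.1 v.2⟩, Sum.inr_ne_inl⟩)
    ?_ (fun _ => rfl) (fun _ => rfl) (fun _ => rfl) (fun v => dif_neg v.1.2) ?_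
  · intro a b hab
    exact Subtype.ext (Sum.inl_injective (congrArg Subtype.val hab))
  · rintro ⟨e | v, he⟩
    · exact .inl ⟨⟨e, fun h => he (congrArg Sum.inl h)⟩, rfl⟩
    · exact .inr ⟨⟨⟨v.1, hne v⟩, fun e h => v.2 e.1 (congrArg Subtype.val h)⟩, rfl⟩

/-- Plugging does not change the edges emitted by a vertex that is not a sink. -/
noncomputable def emittedPlugEquiv {G : DirGraph} {w : G.V} (hw : ∃ e, G.s e = w) :
    {e : G.E // G.s e = w} ≃ {e : G.plug.E // G.plug.s e = w} :=
  Equiv.ofBijective (fun e => ⟨.inl e.1, e.2⟩) <| by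
    refine ⟨fun a b h => Subtype.ext (Sum.inl_injective (congrArg Subtype.val h)), ?_⟩
    rintro ⟨e | v, he⟩
    · exact ⟨⟨e, he⟩, rfl⟩
    · exact absurd he (sink_ne_of_emits hw v)

/-- Plugging does not change the edges received by a vertex that is not a sink. -/
noncomputable def receivedPlugEquiv {G : DirGraph} {w : G.V} (hw : ∃ e, G.s e = w) :
    {e : G.E // G.r e = w} ≃ {e : G.plug.E // G.plug.r e = w} :=
  Equiv.ofBijective (fun e => ⟨.inl e.1, e.2⟩) <| by
    refine ⟨fun a b h => Subtype.ext (Sum.inl_injective (congrArg Subtype.val h)), ?_⟩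
    rintro ⟨e | v, he⟩
    · exact ⟨⟨e, he⟩, rfl⟩
    · exact absurd he (sink_ne_of_emits hw v)

/-- Every edge of `G` has a copy in an outsplit of `G`. -/
theorem MoveOData.exists_copy {G : DirGraph} (d : MoveOData G) (e : G.E) :
    ∃ e', d.graph.s e' =
      if h : G.s e = d.w then .inr (d.P ⟨e, h⟩) else .inl ⟨G.s e, h⟩ := by
  obtain ⟨e₀, he₀⟩ := d.notSink
  by_cases h : G.r e = d.w
  · exact ⟨.inr (⟨e, h⟩, d.P ⟨e₀, he₀⟩), rfl⟩
  · exact ⟨.inl ⟨e, h⟩, rfl⟩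

theorem MoveOData.sink_eq_inl {G : DirGraph} (d : MoveOData G) (v : d.graph.V)
    (hv : ∀ e, d.graph.s e ≠ v) :
    ∃ u : {v : G.V // v ≠ d.w}, v = .inl u ∧ ∀ e, G.s e ≠ u.1 := by
  obtain u | i := v
  · refine ⟨u, rfl, fun e he => ?_⟩
    obtain ⟨e', he'⟩ := d.exists_copy e
    refine hv e' (he'.trans ((dif_neg (he ▸ u.2)).trans ?_))
    exact congrArg Sum.inl (Subtype.ext he)
  · obtain ⟨⟨e, h⟩, rfl⟩ := d.surj i
    obtain ⟨e', he'⟩ := d.exists_copy e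
    exact absurd (he'.trans (dif_pos h)) (hv e')

theorem MoveOData.inl_sink {G : DirGraph} (d : MoveOData G) (u : {v : G.V // v ≠ d.w})
    (hu : ∀ e, G.s e ≠ u.1) (e : d.graph.E) : d.graph.s e ≠ .inl u := by
  have key (e : G.E) : (if h : G.s e = d.w then .inr (d.P ⟨e, h⟩) else .inl ⟨G.s e, h⟩ :
      {v : G.V // v ≠ d.w} ⊕ Fin d.nparts) ≠ .inl u := by
    split
    · exact Sum.inr_ne_inl
    · exact fun h => hu e (congrArg Subtype.val (Sum.inl_injective h))
  obtain e | ⟨e, i⟩ := e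
  · exact key e.1
  · exact key e.1

theorem IsMoveO.plug {G H : DirGraph} : IsMoveO G H → IsMoveO (plug G) (plug H) := by
  rintro ⟨d, hd⟩
  let φ := emittedPlugEquiv d.notSink
  have hne := sink_ne_of_emits d.notSink
  have hinf (i : Fin d.nparts) :
      {e | (d.P ∘ φ.symm) e = i}.Infinite → {e | d.P e = i}.Infinite := fun h =>
    Set.infinite_of_injOn_mapsTo φ.symm.injective.injOn (fun _ he => he) h
  let d' : MoveOData G.plug :=
    { w := d.w
      notSink := d.notSink.imp' Sum.inl fun _ h => h
      nparts := d.nparts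
      P := d.P ∘ φ.symm
      surj := d.surj.comp φ.symm.surjective
      oneInfinite := fun i j hi hj => d.oneInfinite i j (hinf i hi) (hinf j hj) }
  have hP (e : G.E) (h : G.s e = d.w) : d'.P ⟨.inl e, h⟩ = d.P ⟨e, h⟩ :=
    congrArg d.P (φ.symm_apply_apply ⟨e, h⟩)
  have hsplit (e : G.E) :
      (if h : G.s e = d.w then .inr (d'.P ⟨.inl e, h⟩) else .inl ⟨G.s e, h⟩ :
        {v : G.V // v ≠ d.w} ⊕ Fin d.nparts) =
      if h : G.s e = d.w then .inr (d.P ⟨e, h⟩) else .inl ⟨G.s e, h⟩ := by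
    simp only [hP]
  choose u hu hsink using d.sink_eq_inl
  refine ⟨d', GraphIso.trans ?_ hd.plug⟩
  refine graphIso_plug_of_loops (K := d.graph) (H := d'.graph) (Equiv.refl _)
    (Sum.map (fun e => ⟨.inl e.1, e.2⟩) (Prod.map (fun e => ⟨.inl e.1, e.2⟩) id))
    (fun v => .inl ⟨.inr ⟨(u v.1 v.2).1, hsink v.1 v.2⟩, (u v.1 v.2).2⟩) ?_ ?_ ?_ ?_ ?_ ?_
  · refine Function.Injective.sumMap ?_ (Function.Injective.prodMap ?_ Function.injective_id) <;>
      exact fun a b hab => Subtype.ext (Sum.inl_injective (congrArg Subtype.val hab))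
  · rintro (⟨e, he⟩ | ⟨⟨e, he⟩, i⟩)
    · exact hsplit e
    · exact hsplit e
  · rintro (e | ⟨e, i⟩) <;> rfl
  · exact fun v => (dif_neg (u v.1 v.2).2).trans (hu v.1 v.2).symm
  · exact fun v => (hu v.1 v.2).symm
  · rintro (⟨e | v, he⟩ | ⟨⟨e | v, he⟩, i⟩)
    · exact .inl ⟨.inl ⟨e, he⟩, rfl⟩
    · have hv := d.inl_sink ⟨v.1, he⟩ v.2
      have huv : (u _ hv).1 = v.1 :=
        (congrArg Subtype.val (Sum.inl_injective (hu _ hv))).symm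
      exact .inr ⟨⟨.inl ⟨v.1, he⟩, hv⟩, congrArg Sum.inl
        (Subtype.ext (congrArg Sum.inr (Subtype.ext huv)))⟩
    · exact .inl ⟨.inr (⟨e, he⟩, i), rfl⟩
    · exact absurd he (hne v)

theorem MoveIData.sink_eq_inl {G : DirGraph} (d : MoveIData G) (v : d.graph.V)
    (hv : ∀ e, d.graph.s e ≠ v) :
    ∃ u : {v : G.V // v ≠ d.w}, v = .inl u ∧ ∀ e, G.s e ≠ u.1 := by
  obtain u | i := v
  · exact ⟨u, rfl, fun e he =>
      hv (.inl ⟨e, he ▸ u.2⟩) (congrArg Sum.inl (Subtype.ext he))⟩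
  · obtain ⟨e, he⟩ := d.regular.2
    exact absurd rfl (hv (.inr (⟨e, he⟩, i)))

theorem MoveIData.inl_sink {G : DirGraph} (d : MoveIData G) (u : {v : G.V // v ≠ d.w})
    (hu : ∀ e, G.s e ≠ u.1) (e : d.graph.E) : d.graph.s e ≠ .inl u := by
  obtain e | ⟨e, i⟩ := e
  · exact fun h => hu e.1 (congrArg Subtype.val (Sum.inl_injective h))
  · exact Sum.inr_ne_inl

theorem IsMoveI.plug {G H : DirGraph} : IsMoveI G H → IsMoveI (plug G) (plug H) := by
  rintro ⟨d, hd⟩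
  let φ := receivedPlugEquiv d.regular.2
  have hne := sink_ne_of_emits d.regular.2
  let d' : MoveIData G.plug :=
    { w := d.w
      regular := d.regular.plug
      notSource := d.notSource.imp' Sum.inl fun _ h => h
      nparts := d.nparts
      P := d.P ∘ φ.symm
      surj := d.surj.comp φ.symm.surjective }
  have hP (e : G.E) (h : G.r e = d.w) : d'.P ⟨.inl e, h⟩ = d.P ⟨e, h⟩ :=
    congrArg d.P (φ.symm_apply_apply ⟨e, h⟩)
  have hsplit (e : G.E) :
      (if h : G.r e = d.w then .inr (d'.P ⟨.inl e, h⟩) else .inl ⟨G.r e, h⟩ :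
        {v : G.V // v ≠ d.w} ⊕ Fin d.nparts) =
      if h : G.r e = d.w then .inr (d.P ⟨e, h⟩) else .inl ⟨G.r e, h⟩ := by
    simp only [hP]
  choose u hu hsink using d.sink_eq_inl
  refine ⟨d', GraphIso.trans ?_ hd.plug⟩
  refine graphIso_plug_of_loops (K := d.graph) (H := d'.graph) (Equiv.refl _)
    (Sum.map (fun e => ⟨.inl e.1, e.2⟩) (Prod.map (fun e => ⟨.inl e.1, e.2⟩) id))
    (fun v => .inl ⟨.inr ⟨(u v.1 v.2).1, hsink v.1 v.2⟩, (u v.1 v.2).2⟩) ?_ ?_ ?_ ?_ ?_ ?_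
  · refine Function.Injective.sumMap ?_ (Function.Injective.prodMap ?_ Function.injective_id) <;>
      exact fun a b hab => Subtype.ext (Sum.inl_injective (congrArg Subtype.val hab))
  · rintro (e | ⟨e, i⟩) <;> rfl
  · rintro (⟨e, he⟩ | ⟨⟨e, he⟩, i⟩)
    · exact hsplit e
    · exact hsplit e
  · exact fun v => (hu v.1 v.2).symm
  · exact fun v => (dif_neg (u v.1 v.2).2).trans (hu v.1 v.2).symm
  · rintro (⟨e | v, he⟩ | ⟨⟨e | v, he⟩, i⟩)
    · exact .inl ⟨.inl ⟨e, he⟩, rfl⟩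
    · have hv := d.inl_sink ⟨v.1, he⟩ v.2
      have huv : (u _ hv).1 = v.1 :=
        (congrArg Subtype.val (Sum.inl_injective (hu _ hv))).symm
      exact .inr ⟨⟨.inl ⟨v.1, he⟩, hv⟩, congrArg Sum.inl
        (Subtype.ext (congrArg Sum.inr (Subtype.ext huv)))⟩
    · exact .inl ⟨.inr (⟨e, he⟩, i), rfl⟩
    · exact absurd he (hne v)

/-- The inclusion of the edges of `G` into those of `plug G`. -/
def plugEdge (G : DirGraph) : G.E → G.plug.E := Sum.inl

theorem IsReturnPath.plug {G : DirGraph} {v : G.V} {p : List G.E} (hp : G.IsReturnPath v p) :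
    G.plug.IsReturnPath v (p.map G.plugEdge) := by
  obtain ⟨h, hc, hs, hr, hd⟩ := hp
  refine ⟨by simpa using h, (List.isChain_map G.plugEdge).2 hc, ?_, ?_, ?_⟩
  · rw [List.head_map]
    exact hs
  · rw [List.getLast_map]
    exact hr
  · rw [← List.map_dropLast]
    intro e he
    obtain ⟨a, ha, rfl⟩ := List.mem_map.1 he
    exact hd a ha

theorem TwoReturnPaths.plug {G : DirGraph} {v : G.V} (h : G.TwoReturnPaths v) :
    G.plug.TwoReturnPaths v := by
  obtain ⟨p, q, hp, hq, hpq⟩ := h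
  exact ⟨_, _, hp.plug, hq.plug, fun h => hpq (Sum.inl_injective.list_map h)⟩

theorem MoveCData.sink_eq_inl {G : DirGraph} (d : MoveCData G) (v : d.graph.V)
    (hv : ∀ e, d.graph.s e ≠ v) : ∃ u : G.V, v = .inl u ∧ ∀ e, G.s e ≠ u := by
  obtain u | i := v
  · exact ⟨u, rfl, fun e he => hv (.inl e) (congrArg Sum.inl he)⟩
  · fin_cases i
    · exact absurd rfl (hv (.inr 1))
    · exact absurd rfl (hv (.inr 4))

theorem MoveCData.inl_sink {G : DirGraph} (d : MoveCData G) (u : G.V)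
    (hu : ∀ e, G.s e ≠ u) (e : d.graph.E) : d.graph.s e ≠ .inl u := by
  obtain e | i := e
  · exact fun h => hu e (Sum.inl_injective h)
  · obtain ⟨e, he⟩ := d.regular.2
    fin_cases i
    · exact fun h => hu e (Eq.trans he (Sum.inl_injective h))
    all_goals exact Sum.inr_ne_inl

theorem IsMoveC.plug {G H : DirGraph} : IsMoveC G H → IsMoveC (plug G) (plug H) := by
  rintro ⟨d, hd⟩
  let d' : MoveCData G.plug := ⟨d.v, d.regular.plug, d.twoRet.plug⟩
  choose u hu hsink using d.sink_eq_inl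
  refine ⟨d', GraphIso.trans ?_ hd.plug⟩
  refine graphIso_plug_of_loops (K := d.graph) (H := d'.graph) (Equiv.refl _)
    (Sum.map Sum.inl id) (fun v => .inl (.inr ⟨u v.1 v.2, hsink v.1 v.2⟩))
    (Sum.inl_injective.sumMap Function.injective_id) ?_ ?_
    (fun v => (hu v.1 v.2).symm) (fun v => (hu v.1 v.2).symm) ?_
  · rintro (e | i) <;> rfl
  · rintro (e | i) <;> rfl
  · rintro ((e | v) | i)
    · exact .inl ⟨.inl e, rfl⟩
    · have hv := d.inl_sink v.1 v.2
      exact .inr ⟨⟨.inl v.1, hv⟩, congrArg Sum.inl (congrArg Sum.inr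
        (Subtype.ext (Sum.inl_injective (hu _ hv)).symm))⟩
    · exact .inl ⟨.inr i, rfl⟩

theorem ElemME.plug {G H : DirGraph} : ElemME G H → ElemME (plug G) (plug H) :=
  Or.imp GraphIso.plug <| Or.imp IsMoveO.plug <| Or.imp IsMoveI.plug <|
    Or.imp IsMoveR.plug IsMoveS.plug

theorem ElemCE.plug {G H : DirGraph} : ElemCE G H → ElemCE (plug G) (plug H) :=
  Or.imp ElemME.plug IsMoveC.plug

theorem eqvGen_plug {R : DirGraph → DirGraph → Prop} (hR : ∀ G H, R G H → R (plug G) (plug H))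
    {G H : DirGraph} (h : Relation.EqvGen R G H) : Relation.EqvGen R (plug G) (plug H) := by
  induction h with
  | rel _ _ h => exact .rel _ _ (hR _ _ h)
  | refl _ => exact .refl _
  | symm _ _ _ ih => exact .symm _ _ ih
  | trans _ _ _ _ _ ih₁ ih₂ => exact .trans _ _ _ ih₁ ih₂

end DirGraph

open DirGraph in
/-- Lemma `CEpassestoplugged`: for graphs with finitely many vertices,
`E ∼_CE F` implies `E∧ ∼_CE F∧`, and `E ∼_ME F` implies `E∧ ∼_ME F∧`. -/
theorem stmt11 (E F : DirGraph) (hcE : Countable E.E) (hcF : Countable F.E)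
    (hE : Finite E.V) (hF : Finite F.V) :
    (CuntzMoveEquiv E F → CuntzMoveEquiv (plug E) (plug F)) ∧
    (MoveEquiv E F → MoveEquiv (plug E) (plug F)) := by
  exact ⟨eqvGen_plug (R := ElemCE) fun _ _ => ElemCE.plug,
    eqvGen_plug (R := ElemME) fun _ _ => ElemME.plug⟩
end

section
/- There do not exist integers x, x', y, y', z, z' and s, s' ∈ {1, −1} such that the matrix product [[1, x, y], [0, s, z], [0, 0, 1]] · [[0, 1, 2], [0, 1, 1], [0, 0, 0]] · [[1, x', y'], [0, s', z'], [0, 0, 1]] equals [[0, 1, 0], [0, 1, 1], [0, 0, 0]]. -/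
/-- Example `notalwayssamepre`: there is no solution to the matrix
equation
`[[1,x,y],[0,s,z],[0,0,1]] ⬝ [[0,1,2],[0,1,1],[0,0,0]] ⬝ [[1,x',y'],[0,s',z'],[0,0,1]]
  = [[0,1,0],[0,1,1],[0,0,0]]`
with `s, s' ∈ {1, −1}` and integer entries. -/
theorem stmt16 :
    ¬ ∃ (x x' y y' z z' s s' : ℤ), (s = 1 ∨ s = -1) ∧ (s' = 1 ∨ s' = -1) ∧
      !![(1 : ℤ), x, y; 0, s, z; 0, 0, 1] * !![(0 : ℤ), 1, 2; 0, 1, 1; 0, 0, 0] *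
        !![(1 : ℤ), x', y'; 0, s', z'; 0, 0, 1] =
      !![(0 : ℤ), 1, 0; 0, 1, 1; 0, 0, 0] := by
  rintro ⟨x, x', y, y', z, z', s, s', hs, hs', h⟩
  have h01 := congrFun (congrFun h 0) 1
  have h02 := congrFun (congrFun h 0) 2
  have h11 := congrFun (congrFun h 1) 1
  have h12 := congrFun (congrFun h 1) 2
  simp [Matrix.mul_apply, Fin.sum_univ_three] at h01 h02 h11 h12
  rcases hs with rfl | rfl <;> rcases hs' with rfl | rfl
  · obtain rfl : z' = 0 := by linarith
    linarith
  · norm_num at h11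
  · norm_num at h11
  · obtain rfl : z' = -2 := by linarith
    linarith
end

section
/- Let n ≥ 1 and r ≥ 1 be integers and let B be an n×n integer matrix such that B(i, j) = 0 whenever j ≤ i, and B(i, i+1) = r for all 1 ≤ i ≤ n−1 (the entries B(i, j) for j > i+1 are arbitrary). Then the cokernel ℤⁿ / Bᵀ(ℤⁿ) of the transpose of B is isomorphic to ℤ ⊕ G for a finite abelian group G of order r^{n−1}. -/
/-- The cokernel of a square integer matrix with nonzero determinant has order `|det A|`. -/
theorem Matrix.natCard_quotient_range_mulVecLin {ι : Type*} [Fintype ι] [DecidableEq ι]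
    (A : Matrix ι ι ℤ) (hA : A.det ≠ 0) :
    Nat.card ((ι → ℤ) ⧸ LinearMap.range A.mulVecLin) = A.det.natAbs := by
  have hinj : Function.Injective A.mulVecLin := Matrix.mulVec_injective_of_det_ne_zero hA
  rw [← Submodule.natAbs_det_equiv _ (LinearEquiv.ofInjective A.mulVecLin hinj),
    ← LinearMap.det_toLin' A]
  rfl

/-- If the first row of `A` and its last column vanish, the cokernel of `A` is `ℤ` times the
cokernel of the minor obtained by deleting them. -/
theorem Matrix.nonempty_quotient_range_mulVecLin_equiv {m : ℕ}
    (A : Matrix (Fin (m + 1)) (Fin (m + 1)) ℤ)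
    (hrow : ∀ j, A 0 j = 0) (hcol : ∀ i, A i (Fin.last m) = 0) :
    Nonempty (((Fin (m + 1) → ℤ) ⧸ LinearMap.range A.mulVecLin) ≃ₗ[ℤ]
      ℤ × ((Fin m → ℤ) ⧸ LinearMap.range (A.submatrix Fin.succ Fin.castSucc).mulVecLin)) := by
  set C := A.submatrix Fin.succ Fin.castSucc with hC
  have hzero (x : Fin (m + 1) → ℤ) : A.mulVec x 0 = 0 := by
    simp [Matrix.mulVec, dotProduct, hrow]
  have hsucc (x : Fin (m + 1) → ℤ) (k : Fin m) :
      A.mulVec x k.succ = C.mulVec (fun i => x i.castSucc) k := by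
    simp [Matrix.mulVec, dotProduct, Fin.sum_univ_castSucc, hcol, hC]
  let f : (Fin (m + 1) → ℤ) →ₗ[ℤ] ℤ × ((Fin m → ℤ) ⧸ LinearMap.range C.mulVecLin) :=
    (LinearMap.proj 0).prod
      ((LinearMap.range C.mulVecLin).mkQ ∘ₗ LinearMap.funLeft ℤ ℤ Fin.succ)
  have hf : Function.Surjective f := by
    rintro ⟨a, g⟩
    obtain ⟨y, rfl⟩ := Submodule.mkQ_surjective _ g
    exact ⟨Fin.cons a y, rfl⟩
  have hker : LinearMap.ker f = LinearMap.range A.mulVecLin := by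
    ext y
    have hmem : y ∈ LinearMap.ker f ↔
        y 0 = 0 ∧ (fun k => y (Fin.succ k)) ∈ LinearMap.range C.mulVecLin := by
      rw [LinearMap.mem_ker, ← Submodule.Quotient.mk_eq_zero, ← Prod.mk_eq_zero]
      rfl
    rw [hmem]
    constructor
    · rintro ⟨h0, x, hx⟩
      refine ⟨Fin.snoc x 0, ?_⟩
      ext k
      refine Fin.cases ?_ (fun k => ?_) k
      · simp [hzero, h0]
      · simpa [hsucc] using congrFun hx k
    · rintro ⟨x, rfl⟩
      exact ⟨hzero x, fun i => x i.castSucc, funext fun k => (hsucc x k).symm⟩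
  exact ⟨(Submodule.quotEquivOfEq _ _ hker.symm).trans (f.quotKerEquivOfSurjective hf)⟩

/-- Corollary `Kthy`: if `B` is an `n×n` integer matrix which vanishes
on and below the diagonal and has all entries `r` on the first superdiagonal, then the
cokernel `ℤⁿ / Bᵀ(ℤⁿ)` is isomorphic to `ℤ ⊕ G` for a finite abelian group `G` of
order `r^(n−1)`. -/
theorem stmt17 (n r : ℕ) (hn : 1 ≤ n) (hr : 1 ≤ r)
    (B : Matrix (Fin n) (Fin n) ℤ)
    (hlow : ∀ i j : Fin n, (j : ℕ) ≤ (i : ℕ) → B i j = 0)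
    (hdiag : ∀ i j : Fin n, (j : ℕ) = (i : ℕ) + 1 → B i j = (r : ℤ)) :
    ∃ (G : Type) (_ : AddCommGroup G) (_ : Finite G),
      Nonempty (((Fin n → ℤ) ⧸ LinearMap.range (Matrix.mulVecLin B.transpose)) ≃+ ℤ × G) ∧
      Nat.card G = r ^ (n - 1) := by
  obtain ⟨m, rfl⟩ : ∃ m, n = m + 1 := ⟨n - 1, by omega⟩
  set C := B.transpose.submatrix Fin.succ Fin.castSucc with hC
  have hdet : C.det = (r : ℤ) ^ m := by
    rw [Matrix.det_of_isLowerTriangular]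
    · simp [hC, hdiag]
    · intro i j hij
      exact hlow _ _ (by simpa using hij)
  have hcard : Nat.card ((Fin m → ℤ) ⧸ LinearMap.range C.mulVecLin) = r ^ m := by
    rw [C.natCard_quotient_range_mulVecLin (by rw [hdet]; positivity), hdet, Int.natAbs_pow,
      Int.natAbs_natCast]
  obtain ⟨e⟩ := B.transpose.nonempty_quotient_range_mulVecLin_equiv
    (fun j => hlow j 0 (Nat.zero_le _)) (fun i => hlow _ i (Nat.le_of_lt_succ i.isLt))
  exact ⟨_, inferInstance, Nat.finite_of_card_ne_zero (by rw [hcard]; positivity),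
    ⟨e.toAddEquiv⟩, hcard⟩
end
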